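/- arXiv:2308.15447 — 2 statements merged into one kernel-verified Lean document; each statement's English description precedes it below -/
import Mathlib

section
/- Let L > 0 and let q_e : 𝕋_L → ℝ be smooth with q_e > 0. Define Φ(Q,ω) := (1/(ωε)) · ( ∫₀^∞ y ∫₀^L f(Q(s,y), s; ω) ds dy ) / ( (1/L)∫₀^L q_e(s)³ ds ), where f(Q,s;ω) := (1 − ω q_e(s)/√(ω² q_e(s)² + Q)) ∂_s Q. Fix C₀ > 0. There exists ε₀ ∈ (0,1), depending only on q_e, L, C₀, such that for all 0 < ε < ε₀ the following holds. Let ω₁, ω₂ ∈ [1/2, 2] and ω̄₁, ω̄₂ ∈ ℝ with ω_j² = 1 − ε ω̄_j and |ω̄_j| ≤ C₀ for j = 1, 2, and let Q₁, Q₂ be smooth on 𝕋_L × [0,∞) with ‖Q_j‖_{X_{2,50}} ≤ ε^{0.99}. Then |Φ(Q₁,ω₁) − Φ(Q₂,ω₂)| ≤ ε^{1.97} |ω̄₁ − ω̄₂| + ε^{−0.02} ‖Q₁ − Q₂‖_{X_{1,4}}. -/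
open MeasureTheory Set Function Filter

/-- `k`-th partial derivative in the tangential variable `s` of a function on
`𝕋_L × [0,∞)` (represented as a curried function `ℝ → ℝ → ℝ`). -/
noncomputable def dS (k : ℕ) (h : ℝ → ℝ → ℝ) : ℝ → ℝ → ℝ :=
  fun s ψ => iteratedDeriv k (fun s' => h s' ψ) s

/-- `j`-th partial derivative in the normal (von Mises) variable `ψ`. -/
noncomputable def dPsi (j : ℕ) (h : ℝ → ℝ → ℝ) : ℝ → ℝ → ℝ :=
  fun s ψ => iteratedDeriv j (fun ψ' => h s ψ') ψ

/-- Squared `L²` norm over `𝕋_L × ℝ₊` (fundamental domain `(0,L] × (0,∞)`). -/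
noncomputable def L2sq (L : ℝ) (h : ℝ → ℝ → ℝ) : ℝ :=
  ∫ p in Ioc (0:ℝ) L ×ˢ Ioi (0:ℝ), (h p.1 p.2) ^ 2

/-- Square-integrability over `𝕋_L × ℝ₊`. -/
def FiniteL2 (L : ℝ) (h : ℝ → ℝ → ℝ) : Prop :=
  IntegrableOn (fun p : ℝ × ℝ => (h p.1 p.2) ^ 2) (Ioc (0:ℝ) L ×ˢ Ioi (0:ℝ))

/-- The weight `⟨ψ⟩^m h`. -/
noncomputable def wt (m : ℕ) (h : ℝ → ℝ → ℝ) : ℝ → ℝ → ℝ :=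
  fun s ψ => (1 + ψ) ^ m * h s ψ

/-- Squared `X_{k,m}` norm:
`‖h‖²_{X_{k,m}} = Σ_{k'≤k} Σ_{m'≤m} (‖⟨ψ⟩^{m'}∂_s^{k'}h‖² + ‖⟨ψ⟩^{m'}∂_s^{k'+1}h‖²
+ ‖⟨ψ⟩^{m'}∂_ψ∂_s^{k'}h‖² + ‖⟨ψ⟩^{m'}∂_ψ²∂_s^{k'}h‖²)`. -/
noncomputable def XnormSq (L : ℝ) (k m : ℕ) (h : ℝ → ℝ → ℝ) : ℝ :=
  ∑ k' ∈ Finset.range (k+1), ∑ m' ∈ Finset.range (m+1),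
    (L2sq L (wt m' (dS k' h)) + L2sq L (wt m' (dS (k'+1) h))
      + L2sq L (wt m' (dPsi 1 (dS k' h))) + L2sq L (wt m' (dPsi 2 (dS k' h))))

/-- The `X_{k,m}` norm. -/
noncomputable def Xnorm (L : ℝ) (k m : ℕ) (h : ℝ → ℝ → ℝ) : ℝ :=
  Real.sqrt (XnormSq L k m h)

/-- Membership in the space `X_{k,m}`: all the defining integrands are integrable. -/
def XFinite (L : ℝ) (k m : ℕ) (h : ℝ → ℝ → ℝ) : Prop :=
  ∀ k' ≤ k, ∀ m' ≤ m,
    FiniteL2 L (wt m' (dS k' h)) ∧ FiniteL2 L (wt m' (dS (k'+1) h))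
      ∧ FiniteL2 L (wt m' (dPsi 1 (dS k' h))) ∧ FiniteL2 L (wt m' (dPsi 2 (dS k' h)))

/-- Joint smoothness of a curried function of two real variables. -/
def Smooth2 (h : ℝ → ℝ → ℝ) : Prop :=
  ContDiff ℝ (⊤ : ℕ∞) (fun p : ℝ × ℝ => h p.1 p.2)

/-- Periodicity in the first (tangential) variable. -/
def PeriodicS (L : ℝ) (h : ℝ → ℝ → ℝ) : Prop :=
  ∀ ψ : ℝ, Function.Periodic (fun s => h s ψ) L

/-- Squared `H^n` norm of a function on `𝕋_L`. -/
noncomputable def HnormSq (L : ℝ) (n : ℕ) (b : ℝ → ℝ) : ℝ :=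
  ∑ j ∈ Finset.range (n+1), ∫ s in (0:ℝ)..L, (iteratedDeriv j b s) ^ 2

/-- The implicit part of the Feynman–Lagerstrom selection functional. -/
noncomputable def PhiFL (L : ℝ) (q_e : ℝ → ℝ) (ε : ℝ) (Q : ℝ → ℝ → ℝ) (ω : ℝ) : ℝ :=
  (1 / (ω * ε)) *
    ((∫ y in Ioi (0:ℝ), y * ∫ s in (0:ℝ)..L,
        (1 - ω * q_e s / Real.sqrt (ω ^ 2 * (q_e s) ^ 2 + Q s y)) * dS 1 Q s y)
      / ((1/L) * ∫ s in (0:ℝ)..L, (q_e s) ^ 3))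


lemma alg_key (m M : ℝ) (hm : 0 < m) (q : ℝ) (hq : m ≤ q) (hqM : q ≤ M) (ω Q : ℝ)
    (hω : 1/2 ≤ ω) (hω2 : ω ≤ 2) (hQ : |Q| ≤ m^2/8) :
      ∃ R, R = √(ω^2*q^2+Q) ∧ R^2 = ω^2*q^2+Q ∧ m/3 ≤ R ∧ R ≤ 3*M := by
  have h1 := abs_le.1 hQ
  have h2 : (1/4) * q^2 ≤ ω^2*q^2 := by
    apply mul_le_mul_of_nonneg_right _ (sq_nonneg q); nlinarith
  have h3 : m^2 ≤ q^2 := by nlinarith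
  have h4 : ω^2*q^2 ≤ 4 * M^2 := by
    apply mul_le_mul <;> first | nlinarith | positivity
  have h5 : m^2 ≤ M^2 := by nlinarith
  have hmm : 0 < m^2 := by positivity
  refine ⟨_, rfl, Real.sq_sqrt (by linarith), ?_, ?_⟩
  · apply Real.le_sqrt_of_sq_le; linarith
  · apply Real.sqrt_le_iff.2 ⟨by linarith, ?_⟩; linarith

lemma div_bd (n d A t e : ℝ) (he : 0 < e) (hd : e ≤ d) (hn : |n| ≤ A * t) :
    |n / d| ≤ A / e * t := by
  have hdp : 0 < d := he.trans_le hd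
  rw [abs_div, abs_of_pos hdp, div_le_iff₀ hdp]
  have h0 : 0 ≤ A * t := (abs_nonneg n).trans hn
  have : A / e * t * d = A * t * (d / e) := by field_simp
  rw [this]
  have : 1 ≤ d / e := (one_le_div he).2 hd
  nlinarith

lemma alg1 (m : ℝ) (hm : 0 < m) (q ω Q R : ℝ) (hRs : R^2 = ω^2*q^2+Q) (hR : m/3 ≤ R)
    (hω : 1/2 ≤ ω) (hq : m ≤ q) :
    |1/ω - q/R| ≤ 1/(1/2*(m/3)*(m/3)) * |Q| := by
  have hRp : 0 < R := by linarith
  have hqp : 0 < q := by linarith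
  have hwp : 0 < ω := by linarith
  have e : 1/ω - q/R = Q / (ω*R*(R+ω*q)) := by
    have hQ : Q = R^2 - ω^2*q^2 := by linarith
    have : R + ω*q ≠ 0 := by positivity
    rw [hQ]; field_simp; ring
  rw [e]
  apply div_bd _ _ _ _ _ (by positivity)
  · have : m/3 ≤ R + ω*q := by have : 0 < ω*q := by positivity
                               linarith
    gcongr
  · simp

lemma alg2 (m M : ℝ) (hm : 0 < m) (q ω Q Q' R S : ℝ) (hRs : R^2 = ω^2*q^2+Q) (hR : m/3 ≤ R)
    (hSs : S^2 = ω^2*q^2+Q') (hS : m/3 ≤ S) (hq : m ≤ q) (hqM : q ≤ M) :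
    |(1/ω - q/R) - (1/ω - q/S)| ≤ M/((m/3)*(m/3)*(m/3+m/3)) * |Q-Q'| := by
  have hRp : 0 < R := by linarith
  have hSp : 0 < S := by linarith
  have hqp : 0 < q := by linarith
  have e : (1/ω - q/R) - (1/ω - q/S) = q * (Q-Q') / (R*S*(R+S)) := by
    have hQ : Q - Q' = R^2 - S^2 := by linarith
    have : R + S ≠ 0 := by positivity
    have e2 : (1/ω - q/R) - (1/ω - q/S) = q/S - q/R := by ring
    rw [hQ, e2]; field_simp; ring
  rw [e]
  apply div_bd _ _ _ _ _ (by positivity)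
  · gcongr
  · rw [abs_mul, abs_of_pos hqp]; gcongr

lemma alg3 (m M : ℝ) (hm : 0 < m) (q ω ω' Q R T : ℝ) (hRs : R^2 = ω^2*q^2+Q) (hR : m/3 ≤ R)
    (hTs : T^2 = ω'^2*q^2+Q) (hT : m/3 ≤ T) (hq : m ≤ q) (hqM : q ≤ M)
    (hRM : R ≤ 3*M) (hTM : T ≤ 3*M)
    (hω : 1/2 ≤ ω) (hω2 : ω ≤ 2) (hω' : 1/2 ≤ ω') (hω2' : ω' ≤ 2) :
    ∃ K, K = 1/(m/3) * ((3*M)*(3*M+3*M)+2*M*(3*M+3*M)+2*M*(2*M)*2) / ((1/2)*(1/2)*((m/3)*(m/3)*(m/3+m/3))) ∧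
    |(1/ω - q/R) - (1/ω' - q/T)| ≤ K * (|ω-ω'| * |Q|) := by
  have hRp : 0 < R := by linarith
  have hTp : 0 < T := by linarith
  have hqp : 0 < q := by linarith
  have hwp : 0 < ω := by linarith
  have hwp' : 0 < ω' := by linarith
  have hM : 0 < M := by linarith
  refine ⟨_, rfl, ?_⟩
  have e : (1/ω - q/R) - (1/ω' - q/T) =
     ((ω'-ω) * ((R - ω*q)*(T*(R+T)) + (T-ω'*q)*(ω*q*(R+T)) + (ω*q)*(ω'*q)*((R - ω*q)+(T-ω'*q))))
       / (ω*ω'*(R*T*(R+T))) := by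
    have hRT : R + T ≠ 0 := by positivity
    have e1 : q/T - q/R = q*(R^2-T^2)/(R*T*(R+T)) := by field_simp; ring
    have e2 : R^2-T^2 = (ω^2-ω'^2)*q^2 := by linarith
    have e3 : (1/ω - q/R) - (1/ω' - q/T) = 1/ω-1/ω' + (q/T-q/R) := by ring
    rw [e3, e1, e2]; field_simp; ring
  have b1 : |R - ω*q| ≤ 1/(m/3) * |Q| := by
    have : R - ω*q = Q / (R+ω*q) := by
      have : R + ω*q ≠ 0 := by positivity
      rw [eq_div_iff this]; linarith
    rw [this]
    apply div_bd _ _ _ _ _ (by positivity)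
    · have : 0 < ω*q := by positivity
      linarith
    · simp
  have b2 : |T - ω'*q| ≤ 1/(m/3) * |Q| := by
    have : T - ω'*q = Q / (T+ω'*q) := by
      have : T + ω'*q ≠ 0 := by positivity
      rw [eq_div_iff this]; linarith
    rw [this]
    apply div_bd _ _ _ _ _ (by positivity)
    · have : 0 < ω'*q := by positivity
      linarith
    · simp
  rw [e]
  apply div_bd _ _ _ _ _ (by positivity)
  · gcongr
  · rw [abs_mul, abs_sub_comm ω' ω]
    have t1 : |(R - ω*q)*(T*(R+T))| ≤ (1/(m/3) * |Q|) * ((3*M)*(3*M+3*M)) := by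
      rw [abs_mul, abs_of_pos (a := T*(R+T)) (by positivity)]; gcongr
    have t2 : |(T - ω'*q)*(ω*q*(R+T))| ≤ (1/(m/3) * |Q|) * (2*M*(3*M+3*M)) := by
      rw [abs_mul, abs_of_pos (a := ω*q*(R+T)) (by positivity)]; gcongr
    have t3 : |(ω*q)*(ω'*q)*((R - ω*q)+(T-ω'*q))| ≤ (2*M)*(2*M)*(1/(m/3) * |Q| + 1/(m/3) * |Q|) := by
      rw [abs_mul, abs_of_pos (a := (ω*q)*(ω'*q)) (by positivity)]
      gcongr
      exact (abs_add_le _ _).trans (add_le_add b1 b2)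
    calc _ ≤ |ω-ω'| * ((1/(m/3) * |Q|) * ((3*M)*(3*M+3*M)) + (1/(m/3) * |Q|) * (2*M*(3*M+3*M))
          + (2*M)*(2*M)*(1/(m/3) * |Q| + 1/(m/3) * |Q|)) := by
          gcongr
          exact (abs_add_le _ _).trans (add_le_add ((abs_add_le _ _).trans (add_le_add t1 t2)) t3)
      _ = _ := by ring

lemma alg_bounds (m M : ℝ) (hm : 0 < m) (hmM : m ≤ M) :
    ∃ K : ℝ, 0 < K ∧ ∀ q : ℝ, m ≤ q → q ≤ M → ∀ ω ω' Q Q' : ℝ, 1/2 ≤ ω → ω ≤ 2 → 1/2 ≤ ω' → ω' ≤ 2 →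
      |Q| ≤ m^2/8 → |Q'| ≤ m^2/8 →
      0 < ω^2*q^2+Q ∧
      |1/ω - q / √(ω^2*q^2+Q)| ≤ K * |Q| ∧
      |(1/ω - q / √(ω^2*q^2+Q)) - (1/ω - q / √(ω^2*q^2+Q'))| ≤ K * |Q - Q'| ∧
      |(1/ω - q / √(ω^2*q^2+Q)) - (1/ω' - q / √(ω'^2*q^2+Q))| ≤ K * (|ω - ω'| * |Q|) := by
  have hM : 0 < M := hm.trans_le hmM
  set K1 := 1/(1/2*(m/3)*(m/3)) with hK1
  set K2 := M/((m/3)*(m/3)*(m/3+m/3)) with hK2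
  set K3 := 1/(m/3) * ((3*M)*(3*M+3*M)+2*M*(3*M+3*M)+2*M*(2*M)*2) / ((1/2)*(1/2)*((m/3)*(m/3)*(m/3+m/3))) with hK3
  have h1 : 0 < K1 := by positivity
  have h2 : 0 < K2 := by positivity
  have h3 : 0 < K3 := by positivity
  refine ⟨K1+K2+K3, by positivity, ?_⟩
  intro q hq hqM ω ω' Q Q' hω hω2 hω' hω2' hQ hQ'
  obtain ⟨R, hR, hRs, hRm, hRM⟩ := alg_key m M hm q hq hqM ω Q hω hω2 hQ
  obtain ⟨S, hS, hSs, hSm, hSM⟩ := alg_key m M hm q hq hqM ω Q' hω hω2 hQ'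
  obtain ⟨T, hT, hTs, hTm, hTM⟩ := alg_key m M hm q hq hqM ω' Q hω' hω2' hQ
  rw [← hR, ← hS, ← hT]
  refine ⟨?_, ?_, ?_, ?_⟩
  · rw [← hRs]; have : 0 < R := by linarith
    positivity
  · refine (alg1 m hm q ω Q R hRs hRm hω hq).trans ?_
    gcongr; linarith
  · refine (alg2 m M hm q ω Q Q' R S hRs hRm hSs hSm hq hqM).trans ?_
    gcongr; linarith
  · obtain ⟨K, hK, h⟩ := alg3 m M hm q ω ω' Q R T hRs hRm hTs hTm hq hqM hRM hTM hω hω2 hω' hω2'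
    refine h.trans ?_
    rw [hK, ← hK3]
    gcongr; linarith

/-- one-dimensional Sobolev bound -/
lemma sob1 (φ φ' : ℝ → ℝ) (hd : ∀ x, HasDerivAt φ (φ' x) x) (hc : Continuous φ') (a b : ℝ) (hab : a < b)
    (x : ℝ) (hx : x ∈ Icc a b) :
    φ x ^ 2 ≤ (1/(b-a) + 1) * ∫ t in a..b, (φ t ^ 2 + φ' t ^ 2) := by
  have hφ : Continuous φ := continuous_iff_continuousAt.2 fun x => (hd x).continuousAt
  set I := ∫ t in a..b, (φ t ^ 2 + φ' t ^ 2) with hI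
  have hsq : ∀ x, HasDerivAt (fun t => φ t ^ 2) (2 * φ x * φ' x) x := by
    intro x
    simpa using (hd x).fun_pow 2
  have hcont : Continuous fun t => φ t ^ 2 + φ' t ^ 2 := by fun_prop
  have hII : ∀ c d, IntervalIntegrable (fun t => φ t ^ 2 + φ' t ^ 2) volume c d :=
    fun c d => hcont.intervalIntegrable c d
  have step : ∀ t ∈ Icc a b, φ x ^ 2 ≤ φ t ^ 2 + I := by
    intro t ht
    have h1 : ∫ u in t..x, 2 * φ u * φ' u = φ x ^ 2 - φ t ^ 2 :=
      intervalIntegral.integral_eq_sub_of_hasDerivAt (fun u _ => hsq u)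
        ((by fun_prop : Continuous fun u => 2 * φ u * φ' u).intervalIntegrable _ _)
    have h2 : |∫ u in t..x, 2 * φ u * φ' u| ≤ |∫ u in t..x, (φ u ^ 2 + φ' u ^ 2)| := by
      rw [← Real.norm_eq_abs (∫ u in t..x, 2 * φ u * φ' u)]
      apply intervalIntegral.norm_integral_le_abs_of_norm_le (Eventually.of_forall ?_) (hII t x)
      intro u
      rw [Real.norm_eq_abs, abs_le]; constructor <;> nlinarith [sq_nonneg (φ u + φ' u), sq_nonneg (φ u - φ' u)]
    have h3 : |∫ u in t..x, (φ u ^ 2 + φ' u ^ 2)| ≤ I := by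
      rw [hI]
      have := intervalIntegral.abs_integral_mono_interval (μ := volume) (f := fun t => φ t ^ 2 + φ' t ^ 2) (a := t) (b := x) (c := a) (d := b) ?_ ?_ (hII a b)
      · refine this.trans (le_of_eq (abs_of_nonneg ?_))
        exact intervalIntegral.integral_nonneg hab.le (fun u _ => by positivity)
      · apply uIoc_subset_uIoc_of_uIcc_subset_uIcc
        rw [uIcc_of_le hab.le]
        exact uIcc_subset_Icc ht hx
      · exact Eventually.of_forall fun u => by simp only [Pi.zero_apply]; positivity
    have := (le_abs_self _).trans (h2.trans h3)
    linarith
  have h4 : ∫ t in a..b, φ x ^ 2 ≤ ∫ t in a..b, (φ t ^ 2 + I) := by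
    apply intervalIntegral.integral_mono_on hab.le (by simp) ((by fun_prop : Continuous fun t => φ t ^ 2 + I).intervalIntegrable _ _)
    exact step
  have h5 : ∫ t in a..b, (φ t ^ 2 + I) = (∫ t in a..b, φ t ^ 2) + (b-a) * I := by
    rw [intervalIntegral.integral_add ((by fun_prop : Continuous fun t => φ t ^ 2).intervalIntegrable _ _) (by simp)]
    simp
  have h6 : ∫ t in a..b, φ t ^ 2 ≤ I := by
    apply intervalIntegral.integral_mono_on hab.le ((by fun_prop : Continuous fun t => φ t ^ 2).intervalIntegrable _ _) (hII a b)
    intro t _; nlinarith [sq_nonneg (φ' t)]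
  have h7 : (b-a) * φ x ^2 ≤ I + (b-a) * I := by
    have : ∫ t in a..b, φ x ^ 2 = (b-a) * φ x ^ 2 := by simp
    linarith
  have hba : 0 < b - a := by linarith
  rw [show (1/(b-a)+1) * I = (I + (b-a)*I)/(b-a) by field_simp, le_div_iff₀ hba]
  linarith

lemma dS_eq (h : ℝ → ℝ → ℝ) (hh : Smooth2 h) (s y : ℝ) :
    dS 1 h s y = fderiv ℝ (fun p : ℝ × ℝ => h p.1 p.2) (s, y) (1, 0) ∧
    HasDerivAt (fun s' => h s' y) (dS 1 h s y) s := by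
  have hd : HasFDerivAt (fun p : ℝ × ℝ => h p.1 p.2) (fderiv ℝ (fun p : ℝ × ℝ => h p.1 p.2) (s, y)) (s, y) :=
    ((hh.differentiable (by simp)) _).hasFDerivAt
  have h1 : HasDerivAt (fun s' : ℝ => ((s', y) : ℝ × ℝ)) (1, 0) s :=
    (hasDerivAt_id s).prodMk (hasDerivAt_const s y)
  have h2 := hd.comp_hasDerivAt s h1
  change HasDerivAt (fun s' => h s' y) _ s at h2
  have h3 : dS 1 h s y = fderiv ℝ (fun p : ℝ × ℝ => h p.1 p.2) (s, y) (1, 0) := by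
    simp only [dS, iteratedDeriv_one]; exact h2.deriv
  exact ⟨h3, h3 ▸ h2⟩

lemma dPsi_eq (h : ℝ → ℝ → ℝ) (hh : Smooth2 h) (s y : ℝ) :
    dPsi 1 h s y = fderiv ℝ (fun p : ℝ × ℝ => h p.1 p.2) (s, y) (0, 1) ∧
    HasDerivAt (fun y' => h s y') (dPsi 1 h s y) y := by
  have hd : HasFDerivAt (fun p : ℝ × ℝ => h p.1 p.2) (fderiv ℝ (fun p : ℝ × ℝ => h p.1 p.2) (s, y)) (s, y) :=
    ((hh.differentiable (by simp)) _).hasFDerivAt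
  have h1 : HasDerivAt (fun y' : ℝ => ((s, y') : ℝ × ℝ)) (0, 1) y :=
    (hasDerivAt_const y s).prodMk (hasDerivAt_id y)
  have h2 := hd.comp_hasDerivAt y h1
  change HasDerivAt (fun y' => h s y') _ y at h2
  have h3 : dPsi 1 h s y = fderiv ℝ (fun p : ℝ × ℝ => h p.1 p.2) (s, y) (0, 1) := by
    simp only [dPsi, iteratedDeriv_one]; exact h2.deriv
  exact ⟨h3, h3 ▸ h2⟩

lemma dS_smooth (h : ℝ → ℝ → ℝ) (hh : Smooth2 h) : Smooth2 (dS 1 h) := by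
  have : (fun p : ℝ × ℝ => dS 1 h p.1 p.2) = fun p => fderiv ℝ (fun p : ℝ × ℝ => h p.1 p.2) p (1, 0) := by
    ext p; exact (dS_eq h hh p.1 p.2).1
  unfold Smooth2; rw [this]
  exact (ContDiff.fderiv_right hh (by simp)).clm_apply contDiff_const

lemma dPsi_smooth (h : ℝ → ℝ → ℝ) (hh : Smooth2 h) : Smooth2 (dPsi 1 h) := by
  have : (fun p : ℝ × ℝ => dPsi 1 h p.1 p.2) = fun p => fderiv ℝ (fun p : ℝ × ℝ => h p.1 p.2) p (0, 1) := by
    ext p; exact (dPsi_eq h hh p.1 p.2).1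
  unfold Smooth2; rw [this]
  exact (ContDiff.fderiv_right hh (by simp)).clm_apply contDiff_const

lemma L2sq_nonneg (L : ℝ) (h : ℝ → ℝ → ℝ) : 0 ≤ L2sq L h :=
  integral_nonneg fun _ => sq_nonneg _

lemma X_le (L : ℝ) (k m : ℕ) (h : ℝ → ℝ → ℝ) (k' m' : ℕ) (hk : k' ≤ k) (hm : m' ≤ m) :
    L2sq L (wt m' (dS k' h)) + L2sq L (wt m' (dS (k'+1) h))
      + L2sq L (wt m' (dPsi 1 (dS k' h))) + L2sq L (wt m' (dPsi 2 (dS k' h))) ≤ XnormSq L k m h := by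
  have hn : ∀ a b, 0 ≤ L2sq L (wt b (dS a h)) + L2sq L (wt b (dS (a+1) h))
      + L2sq L (wt b (dPsi 1 (dS a h))) + L2sq L (wt b (dPsi 2 (dS a h))) := by
    intro a b
    linarith [L2sq_nonneg L (wt b (dS a h)), L2sq_nonneg L (wt b (dS (a+1) h)), L2sq_nonneg L (wt b (dPsi 1 (dS a h))), L2sq_nonneg L (wt b (dPsi 2 (dS a h)))]
  unfold XnormSq
  refine le_trans ?_ (Finset.single_le_sum (fun a _ => Finset.sum_nonneg fun b _ => hn a b) (Finset.mem_range.2 (Nat.lt_succ_of_le hk)))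
  exact Finset.single_le_sum (f := fun b => L2sq L (wt b (dS k' h)) + L2sq L (wt b (dS (k'+1) h))
      + L2sq L (wt b (dPsi 1 (dS k' h))) + L2sq L (wt b (dPsi 2 (dS k' h)))) (fun b _ => hn k' b) (Finset.mem_range.2 (Nat.lt_succ_of_le hm))

lemma wt_zero (h : ℝ → ℝ → ℝ) : wt 0 h = h := by
  funext s y; simp [wt]

lemma dS_zero (h : ℝ → ℝ → ℝ) : dS 0 h = h := by
  funext s y; simp [dS]


/-- two-dimensional Sobolev bound, abstract form -/
lemma sob2 (L : ℝ) (hL : 0 < L) (h h1 h2 h3 : ℝ → ℝ → ℝ)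
    (c0 : Continuous fun p : ℝ × ℝ => h p.1 p.2)
    (c1 : Continuous fun p : ℝ × ℝ => h1 p.1 p.2)
    (c2 : Continuous fun p : ℝ × ℝ => h2 p.1 p.2)
    (c3 : Continuous fun p : ℝ × ℝ => h3 p.1 p.2)
    (d1 : ∀ s y, HasDerivAt (fun s' => h s' y) (h1 s y) s)
    (d2 : ∀ s y, HasDerivAt (fun y' => h s y') (h2 s y) y)
    (d3 : ∀ s y, HasDerivAt (fun y' => h1 s y') (h3 s y) y)
    (f0 : FiniteL2 L h) (f1 : FiniteL2 L h1) (f2 : FiniteL2 L h2) (f3 : FiniteL2 L h3)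
    (s y : ℝ) (hs : s ∈ Ioc 0 L) (hy : 0 < y) :
    h s y ^ 2 ≤ (1/L + 1) * (2 * ((L2sq L h + L2sq L h2) + (L2sq L h1 + L2sq L h3))) := by
  set G : ℝ × ℝ → ℝ := fun p => (h p.1 p.2 ^ 2 + h2 p.1 p.2 ^ 2) + (h1 p.1 p.2 ^ 2 + h3 p.1 p.2 ^ 2) with hG
  have cG : Continuous G := ((c0.pow 2).add (c2.pow 2)).add ((c1.pow 2).add (c3.pow 2))
  have A := sob1 (fun s' => h s' y) (fun s' => h1 s' y) (fun x => d1 x y)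
    (c1.comp (by fun_prop : Continuous fun s' : ℝ => (s', y))) 0 L hL s ⟨hs.1.le, hs.2⟩
  rw [sub_zero] at A
  refine A.trans ?_
  have hL1 : 0 < 1/L + 1 := by positivity
  apply mul_le_mul_of_nonneg_left _ hL1.le
  have B : ∀ s', h s' y ^ 2 + h1 s' y ^ 2 ≤ 2 * ∫ t in y..(y+1), G (s', t) := by
    intro s'
    have B1 := sob1 (fun t => h s' t) (fun t => h2 s' t) (fun x => d2 s' x)
      (c2.comp (by fun_prop : Continuous fun t : ℝ => (s', t))) y (y+1) (by linarith) y ⟨le_rfl, by linarith⟩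
    have B2 := sob1 (fun t => h1 s' t) (fun t => h3 s' t) (fun x => d3 s' x)
      (c3.comp (by fun_prop : Continuous fun t : ℝ => (s', t))) y (y+1) (by linarith) y ⟨le_rfl, by linarith⟩
    have e : ∫ t in y..(y+1), G (s', t) = (∫ t in y..(y+1), (h s' t ^ 2 + h2 s' t ^ 2)) + ∫ t in y..(y+1), (h1 s' t ^ 2 + h3 s' t ^ 2) := by
      have k : Continuous fun t : ℝ => (s', t) := by fun_prop
      apply intervalIntegral.integral_add
      · exact (((c0.comp k).pow 2).add ((c2.comp k).pow 2)).intervalIntegrable _ _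
      · exact (((c1.comp k).pow 2).add ((c3.comp k).pow 2)).intervalIntegrable _ _
    rw [e]
    norm_num at B1 B2
    linarith
  have hGR : IntegrableOn G (Ioc 0 L ×ˢ Ioc y (y+1)) (volume.prod volume) :=
    (cG.continuousOn.integrableOn_compact (isCompact_Icc.prod isCompact_Icc) : IntegrableOn G (Icc 0 L ×ˢ Icc y (y+1)) (volume.prod volume)).mono_set
      (prod_mono Ioc_subset_Icc_self Ioc_subset_Icc_self)
  have C1 : ∫ s' in (0:ℝ)..L, (h s' y ^ 2 + h1 s' y ^ 2) ≤ 2 * ∫ p in Ioc 0 L ×ˢ Ioc y (y+1), G p := by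
    rw [Measure.volume_eq_prod, setIntegral_prod G hGR, intervalIntegral.integral_of_le hL.le, ← integral_const_mul]
    have k : Continuous fun t : ℝ => (t, y) := by fun_prop
    apply setIntegral_mono_on
    · exact ((((c0.comp k).pow 2).add ((c1.comp k).pow 2)).integrableOn_Icc).mono_set Ioc_subset_Icc_self
    · apply Integrable.const_mul
      rw [IntegrableOn, ← Measure.prod_restrict] at hGR
      exact hGR.integral_prod_left
    · exact measurableSet_Ioc
    · intro s' _
      have := B s'
      rwa [intervalIntegral.integral_of_le (by linarith)] at this
  refine C1.trans ?_
  unfold FiniteL2 at f0 f1 f2 f3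
  have hGW : IntegrableOn G (Ioc 0 L ×ˢ Ioi 0) := (f0.add f2).add (f1.add f3)
  have C2 : ∫ p in Ioc 0 L ×ˢ Ioc y (y+1), G p ≤ ∫ p in Ioc 0 L ×ˢ Ioi 0, G p := by
    apply setIntegral_mono_set hGW
    · exact Eventually.of_forall fun p => by simp only [hG, Pi.zero_apply]; positivity
    · apply LE.le.eventuallyLE
      exact prod_mono le_rfl (fun t ht => hy.trans ht.1)
  have C3 : ∫ p in Ioc 0 L ×ˢ Ioi 0, G p = (L2sq L h + L2sq L (h2)) + (L2sq L (h1) + L2sq L (h3)) := by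
    unfold L2sq
    rw [← integral_add f0 f2, ← integral_add f1 f3]
    exact integral_add (f0.add f2) (f1.add f3)
  rw [C3] at C2
  linarith

lemma sup_bound (L : ℝ) (hL : 0 < L) (h : ℝ → ℝ → ℝ) (hh : Smooth2 h) (hX : XFinite L 2 50 h)
    (s y : ℝ) (hs : s ∈ Ioc 0 L) (hy : 0 < y) :
    h s y ^ 2 ≤ (1/L + 1) * (2 * (2 * XnormSq L 2 50 h)) := by
  have hhs := dS_smooth h hh
  have hhp := dPsi_smooth h hh
  have hhsp := dPsi_smooth _ hhs
  obtain ⟨f0, f1, f2, -⟩ := hX 0 (by norm_num) 0 (by norm_num)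
  obtain ⟨-, -, f3, -⟩ := hX 1 (by norm_num) 0 (by norm_num)
  simp only [wt_zero, dS_zero, zero_add] at f0 f1 f2 f3
  refine (sob2 L hL h (dS 1 h) (dPsi 1 h) (dPsi 1 (dS 1 h)) hh.continuous hhs.continuous
    hhp.continuous hhsp.continuous (fun s y => (dS_eq h hh s y).2) (fun s y => (dPsi_eq h hh s y).2)
    (fun s y => (dPsi_eq _ hhs s y).2) f0 f1 f2 f3 s y hs hy).trans ?_
  have hL1 : 0 < 1/L + 1 := by positivity
  apply mul_le_mul_of_nonneg_left _ hL1.le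
  have X0 := X_le L 2 50 h 0 0 (by norm_num) (by norm_num)
  have X1 := X_le L 2 50 h 1 0 (by norm_num) (by norm_num)
  simp only [wt_zero, dS_zero, zero_add] at X0 X1
  have := L2sq_nonneg L (dPsi 2 h)
  have := L2sq_nonneg L (dS 1 h)
  have := L2sq_nonneg L (dS (1+1) h)
  have := L2sq_nonneg L (dPsi 2 (dS 1 h))
  linarith

/-- Cauchy-Schwarz -/
lemma cs (L : ℝ) (f g : ℝ → ℝ → ℝ) (hf : Continuous fun p : ℝ × ℝ => f p.1 p.2)
    (hg : Continuous fun p : ℝ × ℝ => g p.1 p.2) (ff : FiniteL2 L f) (fg : FiniteL2 L g) :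
    IntegrableOn (fun p : ℝ × ℝ => |f p.1 p.2| * |g p.1 p.2|) (Ioc 0 L ×ˢ Ioi 0) ∧
    ∫ p in Ioc 0 L ×ˢ Ioi 0, |f p.1 p.2| * |g p.1 p.2| ≤ √(L2sq L f) * √(L2sq L g) := by
  have mf : MemLp (fun p : ℝ × ℝ => |f p.1 p.2|) 2 (volume.restrict (Ioc 0 L ×ˢ Ioi 0)) := by
    rw [memLp_two_iff_integrable_sq hf.abs.aestronglyMeasurable]
    simpa [FiniteL2, IntegrableOn] using ff
  have mg : MemLp (fun p : ℝ × ℝ => |g p.1 p.2|) 2 (volume.restrict (Ioc 0 L ×ˢ Ioi 0)) := by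
    rw [memLp_two_iff_integrable_sq hg.abs.aestronglyMeasurable]
    simpa [FiniteL2, IntegrableOn] using fg
  refine ⟨mf.integrable_mul mg, ?_⟩
  have := integral_mul_le_Lp_mul_Lq_of_nonneg (μ := volume.restrict (Ioc (0:ℝ) L ×ˢ Ioi (0:ℝ))) Real.HolderConjugate.two_two
    (f := fun p : ℝ × ℝ => |f p.1 p.2|) (g := fun p : ℝ × ℝ => |g p.1 p.2|)
    (Eventually.of_forall fun _ => abs_nonneg _) (Eventually.of_forall fun _ => abs_nonneg _) (by simpa using mf) (by simpa using mg)
  simpa [L2sq, Real.sqrt_eq_rpow] using this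

lemma X_le0 (L : ℝ) (k m : ℕ) (h : ℝ → ℝ → ℝ) (k' m' : ℕ) (hk : k' ≤ k) (hm : m' ≤ m) :
    √(L2sq L (wt m' (dS k' h))) ≤ Xnorm L k m h := by
  apply Real.sqrt_le_sqrt
  have := X_le L k m h k' m' hk hm
  linarith [L2sq_nonneg L (wt m' (dS (k'+1) h)), L2sq_nonneg L (wt m' (dPsi 1 (dS k' h))), L2sq_nonneg L (wt m' (dPsi 2 (dS k' h)))]

lemma finite_sub (L : ℝ) (f g : ℝ → ℝ → ℝ) (hf : Continuous fun p : ℝ × ℝ => f p.1 p.2)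
    (hg : Continuous fun p : ℝ × ℝ => g p.1 p.2) (ff : FiniteL2 L f) (fg : FiniteL2 L g) :
    FiniteL2 L (fun s y => f s y - g s y) := by
  have mf := (memLp_two_iff_integrable_sq (μ := volume.restrict (Ioc (0:ℝ) L ×ˢ Ioi (0:ℝ))) hf.aestronglyMeasurable).2 ff
  have mg := (memLp_two_iff_integrable_sq (μ := volume.restrict (Ioc (0:ℝ) L ×ˢ Ioi (0:ℝ))) hg.aestronglyMeasurable).2 fg
  exact (mf.sub mg).integrable_sq

lemma phi_rep (L : ℝ) (hL : 0 < L) (q : ℝ → ℝ) (ε ω : ℝ) (hω : 0 < ω) (Q : ℝ → ℝ → ℝ)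
    (hI : IntegrableOn (fun p : ℝ × ℝ => p.2 * ((1/ω - q p.1 / √(ω^2 * (q p.1)^2 + Q p.1 p.2)) * dS 1 Q p.1 p.2))
      (Ioc 0 L ×ˢ Ioi 0)) :
    PhiFL L q ε Q ω = (1/ε) / ((1/L) * ∫ s in (0:ℝ)..L, (q s) ^ 3) *
      ∫ p in Ioc 0 L ×ˢ Ioi 0, p.2 * ((1/ω - q p.1 / √(ω^2 * (q p.1)^2 + Q p.1 p.2)) * dS 1 Q p.1 p.2) := by
  rw [IntegrableOn, Measure.volume_eq_prod, ← Measure.prod_restrict] at hI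
  rw [Measure.volume_eq_prod, ← Measure.prod_restrict, integral_prod_symm _ hI]
  have e : (∫ y in Ioi (0:ℝ), y * ∫ s in (0:ℝ)..L,
        (1 - ω * q s / √(ω ^ 2 * (q s) ^ 2 + Q s y)) * dS 1 Q s y) =
      ω * ∫ y in Ioi (0:ℝ), ∫ s in Ioc 0 L, y * ((1/ω - q s / √(ω^2 * (q s)^2 + Q s y)) * dS 1 Q s y) := by
    rw [← integral_const_mul]
    congr 1; funext y
    rw [intervalIntegral.integral_of_le hL.le, ← integral_const_mul, ← integral_const_mul]
    congr 1; funext s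
    field_simp
  unfold PhiFL
  rw [e]
  field_simp

lemma H_integrable (L K m M : ℝ) (q : ℝ → ℝ) (hq : Continuous q) (ω : ℝ)
    (hω : 1/2 ≤ ω) (hω2 : ω ≤ 2) (Q : ℝ → ℝ → ℝ) (hQ : Smooth2 Q) (hX : XFinite L 2 50 Q)
    (hqm : ∀ s ∈ Ioc 0 L, m ≤ q s ∧ q s ≤ M)
    (hsup : ∀ s ∈ Ioc 0 L, ∀ y, 0 < y → |Q s y| ≤ m^2/8)
    (hK : ∀ q : ℝ, m ≤ q → q ≤ M → ∀ ω ω' Q Q' : ℝ, 1/2 ≤ ω → ω ≤ 2 → 1/2 ≤ ω' → ω' ≤ 2 →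
      |Q| ≤ m^2/8 → |Q'| ≤ m^2/8 →
      0 < ω^2*q^2+Q ∧
      |1/ω - q / √(ω^2*q^2+Q)| ≤ K * |Q| ∧
      |(1/ω - q / √(ω^2*q^2+Q)) - (1/ω - q / √(ω^2*q^2+Q'))| ≤ K * |Q - Q'| ∧
      |(1/ω - q / √(ω^2*q^2+Q)) - (1/ω' - q / √(ω'^2*q^2+Q))| ≤ K * (|ω - ω'| * |Q|)) :
    IntegrableOn (fun p : ℝ × ℝ => p.2 * ((1/ω - q p.1 / √(ω^2 * (q p.1)^2 + Q p.1 p.2)) * dS 1 Q p.1 p.2))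
      (Ioc 0 L ×ˢ Ioi 0) := by
  have c0 : Continuous fun p : ℝ × ℝ => Q p.1 p.2 := hQ.continuous
  have c1 : Continuous fun p : ℝ × ℝ => dS 1 Q p.1 p.2 := (dS_smooth Q hQ).continuous
  have cw : Continuous fun p : ℝ × ℝ => wt 1 Q p.1 p.2 := by
    simp only [wt, pow_one]; exact (continuous_const.add continuous_snd).mul c0
  have f0 := (hX 0 (by norm_num) 1 (by norm_num)).1
  have f1 := (hX 1 (by norm_num) 0 (by norm_num)).1
  simp only [wt_zero, dS_zero] at f0 f1
  have hcs := (cs L (wt 1 Q) (dS 1 Q) cw c1 f0 f1).1.const_mul K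
  refine Integrable.mono' hcs ?_ ?_
  · apply Measurable.aestronglyMeasurable
    have mq : Measurable fun p : ℝ × ℝ => q p.1 := (hq.comp continuous_fst).measurable
    exact measurable_snd.mul ((measurable_const.sub (mq.div
      (((measurable_const.mul (mq.pow_const 2)).add c0.measurable).sqrt))).mul c1.measurable)
  · refine (ae_restrict_iff' (measurableSet_Ioc.prod measurableSet_Ioi)).2 (Eventually.of_forall ?_)
    rintro ⟨s, y⟩ ⟨hs, hy⟩
    simp only [mem_Ioi] at hs hy
    have b := (hK (q s) (hqm s hs).1 (hqm s hs).2 ω ω (Q s y) (Q s y) hω hω2 hω hω2 (hsup s hs y hy) (hsup s hs y hy)).2.1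
    simp only [wt, pow_one, Real.norm_eq_abs]
    rw [abs_mul, abs_mul, abs_mul, abs_of_pos hy, abs_of_pos (by linarith : 0 < 1 + y)]
    calc y * (|1/ω - q s / √(ω^2 * (q s)^2 + Q s y)| * |dS 1 Q s y|)
        ≤ (1+y) * (K * |Q s y| * |dS 1 Q s y|) := by gcongr; linarith
      _ = _ := by ring

lemma main_est (L K m M : ℝ) (hL : 0 < L) (hK0 : 0 < K) (q : ℝ → ℝ) (hq : Continuous q) (ω₁ ω₂ ε E : ℝ) (hε : 0 < ε)
    (hA : 0 < (1/L) * ∫ s in (0:ℝ)..L, (q s) ^ 3)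
    (hω1 : 1/2 ≤ ω₁) (hω12 : ω₁ ≤ 2) (hω2 : 1/2 ≤ ω₂) (hω22 : ω₂ ≤ 2) (Q₁ Q₂ : ℝ → ℝ → ℝ)
    (hQ1 : Smooth2 Q₁) (hX1 : XFinite L 2 50 Q₁)
    (hQ2 : Smooth2 Q₂) (hX2 : XFinite L 2 50 Q₂)
    (hE1 : Xnorm L 2 50 Q₁ ≤ E) (hE2 : Xnorm L 2 50 Q₂ ≤ E)
    (hqm : ∀ s ∈ Ioc 0 L, m ≤ q s ∧ q s ≤ M)
    (hsup1 : ∀ s ∈ Ioc 0 L, ∀ y, 0 < y → |Q₁ s y| ≤ m^2/8)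
    (hsup2 : ∀ s ∈ Ioc 0 L, ∀ y, 0 < y → |Q₂ s y| ≤ m^2/8)
    (hK : ∀ q : ℝ, m ≤ q → q ≤ M → ∀ ω ω' Q Q' : ℝ, 1/2 ≤ ω → ω ≤ 2 → 1/2 ≤ ω' → ω' ≤ 2 →
      |Q| ≤ m^2/8 → |Q'| ≤ m^2/8 →
      0 < ω^2*q^2+Q ∧
      |1/ω - q / √(ω^2*q^2+Q)| ≤ K * |Q| ∧
      |(1/ω - q / √(ω^2*q^2+Q)) - (1/ω - q / √(ω^2*q^2+Q'))| ≤ K * |Q - Q'| ∧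
      |(1/ω - q / √(ω^2*q^2+Q)) - (1/ω' - q / √(ω'^2*q^2+Q))| ≤ K * (|ω - ω'| * |Q|)) :
    |PhiFL L q ε Q₁ ω₁ - PhiFL L q ε Q₂ ω₂| ≤ (1/ε) / ((1/L) * ∫ s in (0:ℝ)..L, (q s) ^ 3) *
      (K * (|ω₁ - ω₂| * E^2 + 2 * E * Xnorm L 1 4 (fun s ψ => Q₁ s ψ - Q₂ s ψ))) := by
  have I1 := H_integrable L K m M q hq ω₁ hω1 hω12 Q₁ hQ1 hX1 hqm hsup1 hK
  have I2 := H_integrable L K m M q hq ω₂ hω2 hω22 Q₂ hQ2 hX2 hqm hsup2 hK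
  rw [phi_rep L hL q ε ω₁ (by linarith) Q₁ I1, phi_rep L hL q ε ω₂ (by linarith) Q₂ I2, ← mul_sub,
    ← integral_sub I1 I2, abs_mul, abs_of_pos (by positivity : 0 < (1/ε) / ((1/L) * ∫ s in (0:ℝ)..L, (q s) ^ 3))]
  apply mul_le_mul_of_nonneg_left _ (by positivity)
  set D : ℝ → ℝ → ℝ := fun s ψ => Q₁ s ψ - Q₂ s ψ with hD
  have hDs : dS 1 D = fun s y => dS 1 Q₁ s y - dS 1 Q₂ s y := by
    funext s y
    have := ((dS_eq Q₁ hQ1 s y).2.fun_sub (dS_eq Q₂ hQ2 s y).2).deriv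
    rw [← this]; simp only [dS, iteratedDeriv_one, hD]
  have a0 : Continuous fun p : ℝ × ℝ => Q₁ p.1 p.2 := hQ1.continuous
  have b0 : Continuous fun p : ℝ × ℝ => Q₂ p.1 p.2 := hQ2.continuous
  have a1 : Continuous fun p : ℝ × ℝ => dS 1 Q₁ p.1 p.2 := (dS_smooth Q₁ hQ1).continuous
  have b1 : Continuous fun p : ℝ × ℝ => dS 1 Q₂ p.1 p.2 := (dS_smooth Q₂ hQ2).continuous
  have cwt : ∀ f : ℝ → ℝ → ℝ, (Continuous fun p : ℝ × ℝ => f p.1 p.2) → Continuous fun p : ℝ × ℝ => wt 1 f p.1 p.2 := by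
    intro f hf
    simp only [wt, pow_one]; exact (continuous_const.add continuous_snd).mul hf
  have fa0 := (hX1 0 (by norm_num) 0 (by norm_num)).1
  have fa0w := (hX1 0 (by norm_num) 1 (by norm_num)).1
  have fa1 := (hX1 1 (by norm_num) 0 (by norm_num)).1
  have fa1w := (hX1 1 (by norm_num) 1 (by norm_num)).1
  have fb0 := (hX2 0 (by norm_num) 0 (by norm_num)).1
  have fb0w := (hX2 0 (by norm_num) 1 (by norm_num)).1
  have fb1 := (hX2 1 (by norm_num) 0 (by norm_num)).1
  simp only [wt_zero, dS_zero] at fa0 fa0w fa1 fa1w fb0 fb0w fb1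
  have fD := finite_sub L Q₁ Q₂ a0 b0 fa0 fb0
  have fDs := finite_sub L _ _ a1 b1 fa1 fb1
  rw [← hDs] at fDs
  have cD : Continuous fun p : ℝ × ℝ => D p.1 p.2 := a0.sub b0
  have cDs : Continuous fun p : ℝ × ℝ => dS 1 D p.1 p.2 := by rw [hDs]; exact a1.sub b1
  obtain ⟨J1, B1⟩ := cs L (wt 1 Q₁) (dS 1 Q₁) (cwt _ a0) a1 fa0w fa1
  obtain ⟨J2, B2⟩ := cs L D (wt 1 (dS 1 Q₁)) cD (cwt _ a1) fD fa1w
  obtain ⟨J3, B3⟩ := cs L (wt 1 Q₂) (dS 1 D) (cwt _ b0) cDs fb0w fDs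
  have n1 := (X_le0 L 2 50 Q₁ 0 1 (by norm_num) (by norm_num)).trans hE1
  have n2 := (X_le0 L 2 50 Q₁ 1 0 (by norm_num) (by norm_num)).trans hE1
  have n3 := (X_le0 L 2 50 Q₁ 1 1 (by norm_num) (by norm_num)).trans hE1
  have n4 := (X_le0 L 2 50 Q₂ 0 1 (by norm_num) (by norm_num)).trans hE2
  have n5 := X_le0 L 1 4 D 0 0 (by norm_num) (by norm_num)
  have n6 := X_le0 L 1 4 D 1 0 (by norm_num) (by norm_num)
  simp only [wt_zero, dS_zero] at n1 n2 n3 n4 n5 n6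
  have hE : 0 ≤ E := (Real.sqrt_nonneg _).trans n1
  have hXD : 0 ≤ Xnorm L 1 4 D := Real.sqrt_nonneg _
  have B1' := B1.trans (mul_le_mul n1 n2 (Real.sqrt_nonneg _) hE)
  have B2' := B2.trans (mul_le_mul n5 n3 (Real.sqrt_nonneg _) hXD)
  have B3' := B3.trans (mul_le_mul n4 n6 (Real.sqrt_nonneg _) hE)
  have J : IntegrableOn (fun p : ℝ × ℝ => K * (|ω₁-ω₂| * (|wt 1 Q₁ p.1 p.2| * |dS 1 Q₁ p.1 p.2|)
      + |D p.1 p.2| * |wt 1 (dS 1 Q₁) p.1 p.2| + |wt 1 Q₂ p.1 p.2| * |dS 1 D p.1 p.2|)) (Ioc 0 L ×ˢ Ioi 0) :=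
    (((J1.const_mul |ω₁-ω₂|).add J2).add J3).const_mul K
  have step := norm_integral_le_of_norm_le (f := fun p : ℝ × ℝ =>
     p.2 * ((1/ω₁ - q p.1 / √(ω₁^2 * (q p.1)^2 + Q₁ p.1 p.2)) * dS 1 Q₁ p.1 p.2) -
     p.2 * ((1/ω₂ - q p.1 / √(ω₂^2 * (q p.1)^2 + Q₂ p.1 p.2)) * dS 1 Q₂ p.1 p.2)) J ?_
  · rw [Real.norm_eq_abs] at step
    refine step.trans ?_
    rw [integral_const_mul]
    apply mul_le_mul_of_nonneg_left _ hK0.le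
    have e1 : ∫ p in Ioc 0 L ×ˢ Ioi 0, (|ω₁-ω₂| * (|wt 1 Q₁ p.1 p.2| * |dS 1 Q₁ p.1 p.2|)
      + |D p.1 p.2| * |wt 1 (dS 1 Q₁) p.1 p.2| + |wt 1 Q₂ p.1 p.2| * |dS 1 D p.1 p.2|) =
      |ω₁-ω₂| * (∫ p in Ioc 0 L ×ˢ Ioi 0, |wt 1 Q₁ p.1 p.2| * |dS 1 Q₁ p.1 p.2|)
      + (∫ p in Ioc 0 L ×ˢ Ioi 0, |D p.1 p.2| * |wt 1 (dS 1 Q₁) p.1 p.2|)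
      + ∫ p in Ioc 0 L ×ˢ Ioi 0, |wt 1 Q₂ p.1 p.2| * |dS 1 D p.1 p.2| := by
      rw [← integral_const_mul, ← integral_add (J1.const_mul |ω₁-ω₂|) J2]
      exact integral_add ((J1.const_mul |ω₁-ω₂|).add J2) J3
    rw [e1]
    have := mul_le_mul_of_nonneg_left B1' (abs_nonneg (ω₁-ω₂))
    nlinarith
  · refine (ae_restrict_iff' (measurableSet_Ioc.prod measurableSet_Ioi)).2 (Eventually.of_forall ?_)
    rintro ⟨s, y⟩ ⟨hs, hy⟩
    simp only [mem_Ioi] at hs hy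
    obtain ⟨-, -, -, k3⟩ := hK (q s) (hqm s hs).1 (hqm s hs).2 ω₁ ω₂ (Q₁ s y) (Q₂ s y) hω1 hω12 hω2 hω22 (hsup1 s hs y hy) (hsup2 s hs y hy)
    obtain ⟨-, -, k2, -⟩ := hK (q s) (hqm s hs).1 (hqm s hs).2 ω₂ ω₂ (Q₁ s y) (Q₂ s y) hω2 hω22 hω2 hω22 (hsup1 s hs y hy) (hsup2 s hs y hy)
    obtain ⟨-, k1, -, -⟩ := hK (q s) (hqm s hs).1 (hqm s hs).2 ω₂ ω₂ (Q₂ s y) (Q₂ s y) hω2 hω22 hω2 hω22 (hsup2 s hs y hy) (hsup2 s hs y hy)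
    simp only [wt, pow_one, Real.norm_eq_abs]
    rw [hDs]
    simp only [hD]
    simp only [abs_mul (1+y), abs_of_pos (by linarith : 0 < 1 + y)]
    set g11 := 1/ω₁ - q s / √(ω₁^2 * (q s)^2 + Q₁ s y)
    set g21 := 1/ω₂ - q s / √(ω₂^2 * (q s)^2 + Q₁ s y)
    set g22 := 1/ω₂ - q s / √(ω₂^2 * (q s)^2 + Q₂ s y)
    set u := dS 1 Q₁ s y
    set v := dS 1 Q₂ s y
    have e : y * (g11 * u) - y * (g22 * v) = y * ((g11-g21) * u + (g21-g22)*u + g22*(u-v)) := by ring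
    rw [e, abs_mul, abs_of_pos hy]
    calc y * |(g11-g21) * u + (g21-g22)*u + g22*(u-v)|
        ≤ (1+y) * (K * (|ω₁-ω₂| * |Q₁ s y|) * |u| + K * |Q₁ s y - Q₂ s y| * |u| + K * |Q₂ s y| * |u-v|) := by
          apply mul_le_mul (by linarith) _ (abs_nonneg _) (by linarith)
          refine (abs_add_le _ _).trans (add_le_add ((abs_add_le _ _).trans (add_le_add ?_ ?_)) ?_) <;>
            rw [abs_mul] <;> gcongr
      _ = _ := by ring

/-- **Lipschitz-type contraction estimate on the selection functional `Φ`.** -/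
theorem phi_contraction_estimate
    (L : ℝ) (hL : 0 < L)
    (q_e : ℝ → ℝ) (hqe : ContDiff ℝ (⊤ : ℕ∞) q_e) (hqeper : Function.Periodic q_e L)
    (hqepos : ∀ s, 0 < q_e s)
    (C₀ : ℝ) (hC₀ : 0 < C₀) :
    ∃ ε₀ : ℝ, 0 < ε₀ ∧ ε₀ < 1 ∧
      ∀ ε : ℝ, 0 < ε → ε < ε₀ →
      ∀ ω₁ ω₂ ωbar₁ ωbar₂ : ℝ,
        1/2 ≤ ω₁ → ω₁ ≤ 2 → 1/2 ≤ ω₂ → ω₂ ≤ 2 →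
        ω₁ ^ 2 = 1 - ε * ωbar₁ → ω₂ ^ 2 = 1 - ε * ωbar₂ →
        |ωbar₁| ≤ C₀ → |ωbar₂| ≤ C₀ →
      ∀ Q₁ Q₂ : ℝ → ℝ → ℝ,
        Smooth2 Q₁ → PeriodicS L Q₁ → XFinite L 2 50 Q₁ →
        Xnorm L 2 50 Q₁ ≤ ε ^ (0.99 : ℝ) →
        Smooth2 Q₂ → PeriodicS L Q₂ → XFinite L 2 50 Q₂ →
        Xnorm L 2 50 Q₂ ≤ ε ^ (0.99 : ℝ) →
        |PhiFL L q_e ε Q₁ ω₁ - PhiFL L q_e ε Q₂ ω₂|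
          ≤ ε ^ (1.97 : ℝ) * |ωbar₁ - ωbar₂|
            + ε ^ (-0.02 : ℝ) * Xnorm L 1 4 (fun s ψ => Q₁ s ψ - Q₂ s ψ) := by
  obtain ⟨x0, -, hx0⟩ := isCompact_Icc.exists_isMinOn (nonempty_Icc.2 hL.le) hqe.continuous.continuousOn
  obtain ⟨x1, -, hx1⟩ := isCompact_Icc.exists_isMaxOn (nonempty_Icc.2 hL.le) hqe.continuous.continuousOn
  set m := q_e x0 with hm
  set M := q_e x1 with hM
  have hm0 : 0 < m := hqepos x0
  have hqm : ∀ s ∈ Ioc 0 L, m ≤ q_e s ∧ q_e s ≤ M := fun s hs =>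
    ⟨hx0 (Ioc_subset_Icc_self hs), hx1 (Ioc_subset_Icc_self hs)⟩
  have hmM : m ≤ M := (hqm L ⟨hL, le_rfl⟩).1.trans (hqm L ⟨hL, le_rfl⟩).2
  obtain ⟨K, hK0, hK⟩ := alg_bounds m M hm0 hmM
  have hA : 0 < (1/L) * ∫ s in (0:ℝ)..L, (q_e s) ^ 3 := by
    apply mul_pos (by positivity)
    apply intervalIntegral.intervalIntegral_pos_of_pos ((hqe.continuous.pow 3).intervalIntegrable _ _) _ hL
    intro s; exact pow_pos (hqepos s) 3
  set A := (1/L) * ∫ s in (0:ℝ)..L, (q_e s) ^ 3 with hAdef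
  set C := (1/L + 1) * 4 with hC
  have hC0 : 0 < C := by positivity
  have t1 : Tendsto (fun ε : ℝ => 2 * K / A * ε ^ (0.01:ℝ)) (nhds 0) (nhds 0) := by
    have : Tendsto (fun ε : ℝ => ε ^ (0.01:ℝ)) (nhds 0) (nhds 0) := by
      have h := (Real.continuousAt_rpow_const 0 (0.01:ℝ) (Or.inr (by norm_num))).tendsto
      rwa [Real.zero_rpow (by norm_num)] at h
    simpa using this.const_mul (2*K/A)
  have t2 : Tendsto (fun ε : ℝ => C * (ε ^ (0.99:ℝ))^2) (nhds 0) (nhds 0) := by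
    have : Tendsto (fun ε : ℝ => ε ^ (0.99:ℝ)) (nhds 0) (nhds 0) := by
      have h := (Real.continuousAt_rpow_const 0 (0.99:ℝ) (Or.inr (by norm_num))).tendsto
      rwa [Real.zero_rpow (by norm_num)] at h
    simpa using (this.pow 2).const_mul C
  have ev := (t1.eventually (gt_mem_nhds (zero_lt_one))).and
    (t2.eventually (gt_mem_nhds (by positivity : 0 < (m^2/8)^2)))
  obtain ⟨δ, hδ, hball⟩ := Metric.eventually_nhds_iff.1 ev
  refine ⟨min δ (1/2), by positivity, (min_le_right _ _).trans_lt (by norm_num), ?_⟩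
  intro ε hε hεlt ω₁ ω₂ ωb₁ ωb₂ h11 h12 h21 h22 e1 e2 _ _ Q₁ Q₂ hQ1 _ hX1 hE1 hQ2 _ hX2 hE2
  obtain ⟨p1, p2⟩ := hball (y := ε) (by
    rw [Real.dist_eq, sub_zero, abs_of_pos hε]; exact hεlt.trans_le (min_le_left _ _))
  have hEpos : 0 < ε ^ (0.99:ℝ) := Real.rpow_pos_of_pos hε _
  have sup : ∀ Q : ℝ → ℝ → ℝ, Smooth2 Q → XFinite L 2 50 Q → Xnorm L 2 50 Q ≤ ε ^ (0.99:ℝ) →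
      ∀ s ∈ Ioc 0 L, ∀ y, 0 < y → |Q s y| ≤ m^2/8 := by
    intro Q hQ hX hE s hs y hy
    have b := sup_bound L hL Q hQ hX s y hs hy
    have hn : XnormSq L 2 50 Q ≤ (ε ^ (0.99:ℝ))^2 := (Real.sqrt_le_left hEpos.le).1 hE
    apply abs_le_of_sq_le_sq _ (by positivity)
    have : C * XnormSq L 2 50 Q ≤ C * (ε ^ (0.99:ℝ))^2 := by gcongr
    have hh : (1/L + 1) * (2 * (2 * XnormSq L 2 50 Q)) = C * XnormSq L 2 50 Q := by rw [hC]; ring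
    linarith
  have est := main_est L K m M hL hK0 q_e hqe.continuous ω₁ ω₂ ε (ε ^ (0.99:ℝ)) hε hA h11 h12 h21 h22 Q₁ Q₂
    hQ1 hX1 hQ2 hX2 hE1 hE2 hqm (sup Q₁ hQ1 hX1 hE1) (sup Q₂ hQ2 hX2 hE2) hK
  rw [← hAdef] at est
  refine est.trans ?_
  set X := Xnorm L 1 4 (fun s ψ => Q₁ s ψ - Q₂ s ψ)
  have hX : 0 ≤ X := Real.sqrt_nonneg _
  have hω : |ω₁ - ω₂| ≤ ε * |ωb₁ - ωb₂| := by
    have h : (ω₁ - ω₂) * (ω₁ + ω₂) = ε * (ωb₂ - ωb₁) := by nlinarith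
    have h' : |ω₁ - ω₂| * (ω₁ + ω₂) = ε * |ωb₁ - ωb₂| := by
      have := congrArg abs h
      rwa [abs_mul, abs_mul, abs_of_pos hε, abs_of_pos (by linarith : 0 < ω₁ + ω₂), abs_sub_comm ωb₂] at this
    nlinarith [abs_nonneg (ω₁ - ω₂)]
  have r1 : 1/ε * (ε * (ε ^ (0.99:ℝ))^2) = ε ^ (1.97:ℝ) * ε ^ (0.01:ℝ) := by
    rw [← Real.rpow_add hε, ← Real.rpow_natCast, ← Real.rpow_mul hε.le]
    field_simp
    norm_num
  have r2 : 1/ε * ε ^ (0.99:ℝ) = ε ^ (-0.02:ℝ) * ε ^ (0.01:ℝ) := by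
    rw [← Real.rpow_add hε, one_div, ← Real.rpow_neg_one, ← Real.rpow_add hε]
    norm_num
  have hp1 : 0 < ε ^ (1.97:ℝ) := Real.rpow_pos_of_pos hε _
  have hp2 : 0 < ε ^ (-0.02:ℝ) := Real.rpow_pos_of_pos hε _
  have hp3 : 0 < ε ^ (0.01:ℝ) := Real.rpow_pos_of_pos hε _
  have hKA : 0 < K / A := by positivity
  calc 1/ε/A * (K * (|ω₁ - ω₂| * (ε ^ (0.99:ℝ))^2 + 2 * ε ^ (0.99:ℝ) * X))
      ≤ 1/ε/A * (K * ((ε * |ωb₁ - ωb₂|) * (ε ^ (0.99:ℝ))^2 + 2 * ε ^ (0.99:ℝ) * X)) := by gcongr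
    _ = K/A * (1/ε * (ε * (ε ^ (0.99:ℝ))^2)) * |ωb₁ - ωb₂| + 2*K/A * (1/ε * ε ^ (0.99:ℝ)) * X := by ring
    _ = (K/A * ε ^ (0.01:ℝ)) * (ε ^ (1.97:ℝ) * |ωb₁ - ωb₂|) + (2*K/A * ε ^ (0.01:ℝ)) * (ε ^ (-0.02:ℝ) * X) := by
        rw [r1, r2]; ring
    _ ≤ 1 * (ε ^ (1.97:ℝ) * |ωb₁ - ωb₂|) + 1 * (ε ^ (-0.02:ℝ) * X) := by
        have : K/A * ε ^ (0.01:ℝ) ≤ 1 := by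
          have : 2*K/A * ε ^ (0.01:ℝ) = 2 * (K/A * ε ^ (0.01:ℝ)) := by ring
          have : 0 < K/A * ε ^ (0.01:ℝ) := by positivity
          linarith
        gcongr
    _ = _ := by ring
end

section
/- Let L > 0, let q_e : 𝕋_L → ℝ be smooth with q_e > 0, and fix C₀ > 0. There exist ε₀ ∈ (0,1) and C > 0, depending only on q_e, L, C₀, such that for all 0 < ε < ε₀ the following holds. Let ω₁, ω₂ ∈ [1/2, 2] and ω̄₁, ω̄₂ ∈ ℝ with ω_j² = 1 − ε ω̄_j and |ω̄_j| ≤ C₀, and let Q₁, Q₂ be smooth on 𝕋_L × [0,∞) with ‖Q_j‖_{X_{2,50}} ≤ ε^{0.99} for j = 1, 2. Define U_j := Q_j / (ω_j² q_e(s)² + Q_j). Then for every integer 0 ≤ m ≤ 50: Σ_{j=0}^{1} ‖⟨ψ⟩^m ∂_s^j(U₁ − U₂)‖_{L∞(𝕋_L×ℝ₊)} ≤ C( ‖Q₁ − Q₂‖_{X_{2,m}} + ε^{1.99} |ω̄₁ − ω̄₂| ) and Σ_{j=0}^{2} ‖⟨ψ⟩^m ∂_s^j(U₁ − U₂)‖_{L²(𝕋_L×ℝ₊)}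 ≤ C( ‖Q₁ − Q₂‖_{X_{2,m}} + ε^{1.99} |ω̄₁ − ω̄₂| ). -/
open MeasureTheory Set Function Filter

lemma dS_hasDeriv {h : ℝ → ℝ → ℝ} (hh : Smooth2 h) (s ψ : ℝ) :
    HasDerivAt (fun s' => h s' ψ) (fderiv ℝ (fun p : ℝ × ℝ => h p.1 p.2) (s, ψ) (1, 0)) s := by
  have h1 : HasFDerivAt (fun p : ℝ × ℝ => h p.1 p.2)
      (fderiv ℝ (fun p : ℝ × ℝ => h p.1 p.2) (s, ψ)) (s, ψ) :=
    (hh.differentiable (by simp)).differentiableAt.hasFDerivAt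
  have h2 : HasDerivAt (fun s' : ℝ => (s', ψ)) ((1 : ℝ), (0 : ℝ)) s :=
    (hasDerivAt_id s).prodMk (hasDerivAt_const s ψ)
  exact h1.comp_hasDerivAt s h2

lemma dPsi_hasDeriv {h : ℝ → ℝ → ℝ} (hh : Smooth2 h) (s ψ : ℝ) :
    HasDerivAt (fun ψ' => h s ψ') (fderiv ℝ (fun p : ℝ × ℝ => h p.1 p.2) (s, ψ) (0, 1)) ψ := by
  have h1 : HasFDerivAt (fun p : ℝ × ℝ => h p.1 p.2)
      (fderiv ℝ (fun p : ℝ × ℝ => h p.1 p.2) (s, ψ)) (s, ψ) :=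
    (hh.differentiable (by simp)).differentiableAt.hasFDerivAt
  have h2 : HasDerivAt (fun ψ' : ℝ => (s, ψ')) ((0 : ℝ), (1 : ℝ)) ψ :=
    (hasDerivAt_const ψ s).prodMk (hasDerivAt_id ψ)
  exact h1.comp_hasDerivAt ψ h2

lemma hasDeriv_dS {h : ℝ → ℝ → ℝ} (hh : Smooth2 h) (s ψ : ℝ) :
    HasDerivAt (fun s' => h s' ψ) (dS 1 h s ψ) s := by
  have := dS_hasDeriv hh s ψ
  simpa [dS, iteratedDeriv_one, this.deriv] using this

lemma hasDeriv_dPsi {h : ℝ → ℝ → ℝ} (hh : Smooth2 h) (s ψ : ℝ) :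
    HasDerivAt (fun ψ' => h s ψ') (dPsi 1 h s ψ) ψ := by
  have := dPsi_hasDeriv hh s ψ
  simpa [dPsi, iteratedDeriv_one, this.deriv] using this

lemma Smooth2.dS_one {h : ℝ → ℝ → ℝ} (hh : Smooth2 h) : Smooth2 (dS 1 h) := by
  have e : (fun p : ℝ × ℝ => dS 1 h p.1 p.2)
      = fun p => fderiv ℝ (fun p : ℝ × ℝ => h p.1 p.2) p (1, 0) := by
    funext p
    exact (hasDeriv_dS hh p.1 p.2).unique (dS_hasDeriv hh p.1 p.2)
  unfold Smooth2
  rw [e]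
  exact (hh.fderiv_right (m := (⊤ : ℕ∞)) (by simp)).clm_apply contDiff_const

lemma Smooth2.dPsi_one {h : ℝ → ℝ → ℝ} (hh : Smooth2 h) : Smooth2 (dPsi 1 h) := by
  have e : (fun p : ℝ × ℝ => dPsi 1 h p.1 p.2)
      = fun p => fderiv ℝ (fun p : ℝ × ℝ => h p.1 p.2) p (0, 1) := by
    funext p
    exact (hasDeriv_dPsi hh p.1 p.2).unique (dPsi_hasDeriv hh p.1 p.2)
  unfold Smooth2
  rw [e]
  exact (hh.fderiv_right (m := (⊤ : ℕ∞)) (by simp)).clm_apply contDiff_const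

lemma dS_succ (k : ℕ) (h : ℝ → ℝ → ℝ) : dS (k+1) h = dS 1 (dS k h) := by
  funext s ψ
  simp only [dS, iteratedDeriv_succ, iteratedDeriv_zero]

lemma Smooth2.dS_all {h : ℝ → ℝ → ℝ} (hh : Smooth2 h) (k : ℕ) : Smooth2 (dS k h) := by
  induction k with
  | zero => rwa [dS_zero]
  | succ k ih => rw [dS_succ]; exact ih.dS_one

lemma Smooth2.sub' {g h : ℝ → ℝ → ℝ} (hg : Smooth2 g) (hh : Smooth2 h) :
    Smooth2 (fun s ψ => g s ψ - h s ψ) := ContDiff.sub hg hh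

lemma PeriodicS.dS_all {L : ℝ} {h : ℝ → ℝ → ℝ} (hh : PeriodicS L h) (k : ℕ) :
    PeriodicS L (dS k h) := by
  intro ψ s
  have e : (fun s' => h (s' + L) ψ) = fun s' => h s' ψ := funext fun s' => hh ψ s'
  have := congrFun (iteratedDeriv_comp_add_const k (fun s' => h s' ψ) L) s
  simp only [dS]
  rw [← this, e]

lemma dS_sub {g h : ℝ → ℝ → ℝ} (hg : Smooth2 g) (hh : Smooth2 h) (k : ℕ) :
    dS k (fun s ψ => g s ψ - h s ψ) = fun s ψ => dS k g s ψ - dS k h s ψ := by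
  induction k with
  | zero => simp [dS_zero]
  | succ k ih =>
    rw [dS_succ, ih, dS_succ k g, dS_succ k h]
    funext s ψ
    exact (hasDeriv_dS ((hg.dS_all k).sub' (hh.dS_all k)) s ψ).unique
      ((hasDeriv_dS (hg.dS_all k) s ψ).sub (hasDeriv_dS (hh.dS_all k) s ψ))

lemma dPsi_sub {g h : ℝ → ℝ → ℝ} (hg : Smooth2 g) (hh : Smooth2 h) :
    dPsi 1 (fun s ψ => g s ψ - h s ψ) = fun s ψ => dPsi 1 g s ψ - dPsi 1 h s ψ := by
  funext s ψ
  exact (hasDeriv_dPsi (hg.sub' hh) s ψ).unique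
      ((hasDeriv_dPsi hg s ψ).sub (hasDeriv_dPsi hh s ψ))

lemma Smooth2.wt_cont {g : ℝ → ℝ → ℝ} (hg : Smooth2 g) (m : ℕ) :
    Continuous (fun p : ℝ × ℝ => wt m g p.1 p.2) := by
  have : Continuous (fun p : ℝ × ℝ => g p.1 p.2) := ContDiff.continuous hg
  unfold wt
  fun_prop

lemma FiniteL2.sub' {L : ℝ} {m : ℕ} {g h : ℝ → ℝ → ℝ} (hg : Smooth2 g) (hh : Smooth2 h)
    (ig : FiniteL2 L (wt m g)) (ih : FiniteL2 L (wt m h)) :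
    FiniteL2 L (wt m (fun s ψ => g s ψ - h s ψ)) := by
  unfold FiniteL2 at *
  have := (ig.const_mul 2).add (ih.const_mul 2)
  refine Integrable.mono' this ?_ ?_
  · exact (((hg.sub' hh).wt_cont m).pow 2).aestronglyMeasurable
  · refine Eventually.of_forall fun p => ?_
    rw [Real.norm_of_nonneg (sq_nonneg _)]
    simp only [wt, Pi.add_apply]
    nlinarith [sq_nonneg ((1 + p.2) ^ m * g p.1 p.2 + (1 + p.2) ^ m * h p.1 p.2)]

lemma XnormSq_ge {L : ℝ} {n m k m' : ℕ} (h : ℝ → ℝ → ℝ) (hk : k ≤ n) (hm : m' ≤ m) :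
    L2sq L (wt m' (dS k h)) + L2sq L (wt m' (dS (k+1) h))
      + L2sq L (wt m' (dPsi 1 (dS k h))) + L2sq L (wt m' (dPsi 2 (dS k h)))
      ≤ XnormSq L n m h := by
  unfold XnormSq
  have key : ∀ k' m', 0 ≤ L2sq L (wt m' (dS k' h)) + L2sq L (wt m' (dS (k'+1) h))
      + L2sq L (wt m' (dPsi 1 (dS k' h))) + L2sq L (wt m' (dPsi 2 (dS k' h))) := by
    intro k' m'
    have := L2sq_nonneg L (wt m' (dS k' h))
    have := L2sq_nonneg L (wt m' (dS (k'+1) h))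
    have := L2sq_nonneg L (wt m' (dPsi 1 (dS k' h)))
    have := L2sq_nonneg L (wt m' (dPsi 2 (dS k' h)))
    linarith
  refine le_trans ?_ (Finset.single_le_sum (f := fun k' => ∑ m' ∈ Finset.range (m+1),
    (L2sq L (wt m' (dS k' h)) + L2sq L (wt m' (dS (k'+1) h))
      + L2sq L (wt m' (dPsi 1 (dS k' h))) + L2sq L (wt m' (dPsi 2 (dS k' h)))))
      (fun i _ => Finset.sum_nonneg fun j _ => key i j) (Finset.mem_range.2 (Nat.lt_succ_of_le hk)))
  exact Finset.single_le_sum (f := fun m' => (L2sq L (wt m' (dS k h)) + L2sq L (wt m' (dS (k+1) h))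
      + L2sq L (wt m' (dPsi 1 (dS k h))) + L2sq L (wt m' (dPsi 2 (dS k h)))))
      (fun j _ => key k j) (Finset.mem_range.2 (Nat.lt_succ_of_le hm))

lemma Xnorm_nonneg (L : ℝ) (k m : ℕ) (h : ℝ → ℝ → ℝ) : 0 ≤ Xnorm L k m h := Real.sqrt_nonneg _

lemma Xnorm_sq (L : ℝ) (k m : ℕ) (h : ℝ → ℝ → ℝ) : Xnorm L k m h ^ 2 = XnormSq L k m h := by
  refine Real.sq_sqrt (Finset.sum_nonneg fun k' _ => Finset.sum_nonneg fun m' _ => ?_)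
  have := L2sq_nonneg L (wt m' (dS k' h))
  have := L2sq_nonneg L (wt m' (dS (k'+1) h))
  have := L2sq_nonneg L (wt m' (dPsi 1 (dS k' h)))
  have := L2sq_nonneg L (wt m' (dPsi 2 (dS k' h)))
  linarith

/-- One-dimensional Sobolev inequality. -/
lemma sobolev1 {f f' : ℝ → ℝ} (hf : ∀ x, HasDerivAt f (f' x) x) (hf' : Continuous f')
    {a b x : ℝ} (hab : a < b) (hx : x ∈ Icc a b) :
    f x ^ 2 ≤ (1 / (b - a) + 1) * ∫ t in a..b, (f t ^ 2 + f' t ^ 2) := by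
  have hfc : Continuous f := continuous_iff_continuousAt.2 fun y => (hf y).continuousAt
  set I := ∫ t in a..b, (f t ^ 2 + f' t ^ 2) with hI
  -- for all y: f x ^2 ≤ f y ^ 2 + I
  have key : ∀ y ∈ Icc a b, f x ^ 2 - I ≤ f y ^ 2 := by
    intro y hy
    have h1 : ∫ t in y..x, (2 * f t * f' t) = f x ^ 2 - f y ^ 2 := by
      refine intervalIntegral.integral_eq_sub_of_hasDerivAt (f := fun t => f t ^ 2) (fun t _ => ?_) ?_
      · have := (hf t).fun_pow 2
        simpa using this
      · exact Continuous.intervalIntegrable (by fun_prop) _ _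
    have h2 : |∫ t in y..x, (2 * f t * f' t)| ≤ I := by
      calc |∫ t in y..x, (2 * f t * f' t)| ≤ |∫ t in y..x, (f t ^ 2 + f' t ^ 2)| := by
            refine intervalIntegral.norm_integral_le_abs_of_norm_le (f := fun t => 2 * f t * f' t)
              (Eventually.of_forall fun t => ?_) ?_
            · rw [Real.norm_eq_abs, abs_le]
              constructor <;> nlinarith [sq_nonneg (f t + f' t), sq_nonneg (f t - f' t)]
            · exact Continuous.intervalIntegrable (by fun_prop) _ _
        _ ≤ I := by
            rw [hI, intervalIntegral.abs_integral_eq_abs_integral_uIoc,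
              intervalIntegral.integral_of_le hab.le, abs_of_nonneg
              (setIntegral_nonneg measurableSet_uIoc fun t _ => by positivity)]
            refine setIntegral_mono_set ?_ (Eventually.of_forall fun t => by
              show (0:ℝ) ≤ _; positivity) (LE.le.eventuallyLE ?_)
            · exact (Continuous.integrableOn_Icc (by fun_prop)).mono_set Ioc_subset_Icc_self
            · exact Ioc_subset_Ioc (le_min hy.1 hx.1) (max_le hy.2 hx.2)
    have := (abs_le.1 h2).2
    linarith
  have h3 : ∫ t in a..b, (f x ^ 2 - I) ≤ ∫ t in a..b, f t ^ 2 :=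
    intervalIntegral.integral_mono_on hab.le (by simp)
      (Continuous.intervalIntegrable (by fun_prop) _ _) key
  have h4 : ∫ t in a..b, f t ^ 2 ≤ I :=
    intervalIntegral.integral_mono_on hab.le (Continuous.intervalIntegrable (by fun_prop) _ _)
      (Continuous.intervalIntegrable (by fun_prop) _ _) fun t _ => by nlinarith [sq_nonneg (f' t)]
  rw [intervalIntegral.integral_const, smul_eq_mul] at h3
  have hba : 0 < b - a := sub_pos.2 hab
  have : f x ^ 2 - I ≤ I / (b - a) := by
    rw [le_div_iff₀ hba]; linarith
  calc f x ^ 2 ≤ I / (b - a) + I := by linarith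
    _ = _ := by ring

lemma sobolev2 {L : ℝ} (hL : 0 < L) {m : ℕ} {g : ℝ → ℝ → ℝ} (hg : Smooth2 g) (hp : PeriodicS L g)
    (i1 : FiniteL2 L (wt m g)) (i2 : FiniteL2 L (wt m (dS 1 g)))
    (i3 : FiniteL2 L (wt m (dPsi 1 g))) (i4 : FiniteL2 L (wt m (dPsi 1 (dS 1 g))))
    (s ψ : ℝ) (hψ : 0 ≤ ψ) :
    ((1+ψ)^m * g s ψ) ^ 2 ≤ (2 * (1 / L + 1)) * (L2sq L (wt m g) + L2sq L (wt m (dS 1 g))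
      + L2sq L (wt m (dPsi 1 g)) + L2sq L (wt m (dPsi 1 (dS 1 g)))) := by
  -- reduce to s in [0,L)
  wlog hs : s ∈ Icc 0 L generalizing s
  · obtain ⟨y, hy, e⟩ := (hp ψ).exists_mem_Ico₀ hL s
    have := this y ⟨hy.1, hy.2.le⟩
    have e' : g s ψ = g y ψ := e
    rwa [e']
  have hg1 : Smooth2 (dS 1 g) := hg.dS_one
  have c0 : Continuous (fun p : ℝ × ℝ => g p.1 p.2) := ContDiff.continuous hg
  have c1 : Continuous (fun p : ℝ × ℝ => dS 1 g p.1 p.2) := ContDiff.continuous hg1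
  have c2 : Continuous (fun p : ℝ × ℝ => dPsi 1 g p.1 p.2) := ContDiff.continuous hg.dPsi_one
  have c3 : Continuous (fun p : ℝ × ℝ => dPsi 1 (dS 1 g) p.1 p.2) :=
    ContDiff.continuous hg1.dPsi_one
  set H : ℝ × ℝ → ℝ := fun p => (wt m g p.1 p.2)^2 + (wt m (dS 1 g) p.1 p.2)^2
    + (wt m (dPsi 1 g) p.1 p.2)^2 + (wt m (dPsi 1 (dS 1 g)) p.1 p.2)^2 with hH
  have iH : IntegrableOn H (Ioc 0 L ×ˢ Ioi 0) := ((i1.add i2).add i3).add i4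
  have eH : ∫ p in Ioc 0 L ×ˢ Ioi 0, H p = L2sq L (wt m g) + L2sq L (wt m (dS 1 g))
      + L2sq L (wt m (dPsi 1 g)) + L2sq L (wt m (dPsi 1 (dS 1 g))) := by
    unfold L2sq
    have e1 := integral_add (Integrable.add (Integrable.add i1 i2) i3) i4
    have e2 := integral_add (Integrable.add i1 i2) i3
    have e3 := integral_add i1 i2
    simp only [Pi.add_apply] at e1 e2 e3
    rw [← e3, ← e2, ← e1]
  rw [← eH]
  have cH : Continuous H := by
    simp only [hH]
    exact ((((hg.wt_cont m).pow 2).add ((hg1.wt_cont m).pow 2)).add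
      ((hg.dPsi_one.wt_cont m).pow 2)).add ((hg1.dPsi_one.wt_cont m).pow 2)
  have sub : Ioc (0:ℝ) L ×ˢ Ioc ψ (ψ+1) ⊆ Ioc 0 L ×ˢ Ioi 0 :=
    prod_mono le_rfl fun t ht => lt_of_le_of_lt hψ ht.1
  have iH' : IntegrableOn H (Ioc 0 L ×ˢ Ioc ψ (ψ+1)) := iH.mono_set sub
  have step1 : ∫ p in Ioc 0 L ×ˢ Ioc ψ (ψ+1), H p ≤ ∫ p in Ioc 0 L ×ˢ Ioi 0, H p :=
    setIntegral_mono_set iH (Eventually.of_forall fun p => by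
      simp only [hH, Pi.zero_apply]; positivity) (LE.le.eventuallyLE sub)
  have step2 : ∫ p in Ioc 0 L ×ˢ Ioc ψ (ψ+1), H p
      = ∫ σ in Ioc 0 L, ∫ t in Ioc ψ (ψ+1), H (σ, t) := setIntegral_prod (μ := volume) (ν := volume) H iH'
  have iI : IntegrableOn (fun σ => ∫ t in Ioc ψ (ψ+1), H (σ, t)) (Ioc 0 L) := by
    have : Integrable H ((volume.restrict (Ioc 0 L)).prod (volume.restrict (Ioc ψ (ψ+1)))) := by
      rw [Measure.prod_restrict]; exact iH'
    exact this.integral_prod_left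
  have inner : ∀ σ, (1+ψ)^(2*m) * (g σ ψ ^ 2 + dS 1 g σ ψ ^ 2)
      ≤ 2 * ∫ t in Ioc ψ (ψ+1), H (σ, t) := by
    intro σ
    have a1 := sobolev1 (fun x => hasDeriv_dPsi hg σ x) (by fun_prop) (lt_add_one ψ)
      (left_mem_Icc.2 (lt_add_one ψ).le)
    have a2 := sobolev1 (fun x => hasDeriv_dPsi hg1 σ x) (by fun_prop) (lt_add_one ψ)
      (left_mem_Icc.2 (lt_add_one ψ).le)
    rw [show (1 / (ψ + 1 - ψ) + 1 : ℝ) = 2 by norm_num] at a1 a2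
    have hc : 0 ≤ (1+ψ)^(2*m) := by positivity
    have a3 : (1+ψ)^(2*m) * ((∫ t in ψ..ψ+1, (g σ t ^ 2 + dPsi 1 g σ t ^ 2))
        + ∫ t in ψ..ψ+1, (dS 1 g σ t ^ 2 + dPsi 1 (dS 1 g) σ t ^ 2))
        ≤ ∫ t in ψ..ψ+1, H (σ, t) := by
      rw [← intervalIntegral.integral_add (Continuous.intervalIntegrable (by fun_prop) _ _)
        (Continuous.intervalIntegrable (by fun_prop) _ _), ← intervalIntegral.integral_const_mul]
      refine intervalIntegral.integral_mono_on (lt_add_one ψ).le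
        (Continuous.intervalIntegrable (by fun_prop) _ _)
        (Continuous.intervalIntegrable (by fun_prop) _ _) fun t ht => ?_
      have : (1+ψ)^(2*m) ≤ (1+t)^(2*m) := by
        have := ht.1
        gcongr
      calc _ ≤ (1+t)^(2*m) * (g σ t ^ 2 + dPsi 1 g σ t ^ 2
            + (dS 1 g σ t ^ 2 + dPsi 1 (dS 1 g) σ t ^ 2)) := by gcongr
        _ = H (σ, t) := by simp only [hH, wt]; ring
    rw [intervalIntegral.integral_of_le (f := fun t => H (σ, t)) (lt_add_one ψ).le] at a3
    calc _ ≤ (1+ψ)^(2*m) * (2 * (∫ t in ψ..ψ+1, (g σ t ^ 2 + dPsi 1 g σ t ^ 2))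
        + 2 * ∫ t in ψ..ψ+1, (dS 1 g σ t ^ 2 + dPsi 1 (dS 1 g) σ t ^ 2)) := by gcongr
      _ ≤ _ := by linarith
  have b1 := sobolev1 (fun x => hasDeriv_dS hg x ψ) (by fun_prop) hL hs
  rw [sub_zero] at b1
  have b2 : (1+ψ)^(2*m) * ∫ σ in (0:ℝ)..L, (g σ ψ ^ 2 + dS 1 g σ ψ ^ 2)
      ≤ 2 * ∫ σ in Ioc 0 L, ∫ t in Ioc ψ (ψ+1), H (σ, t) := by
    rw [← intervalIntegral.integral_const_mul, ← integral_const_mul,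
      intervalIntegral.integral_of_le hL.le]
    refine setIntegral_mono ?_ (iI.const_mul 2) inner
    exact (Continuous.integrableOn_Icc (by fun_prop)).mono_set Ioc_subset_Icc_self
  have hc : 0 ≤ (1+ψ)^(2*m) := by positivity
  have hL' : 0 ≤ 1 / L + 1 := by positivity
  calc ((1+ψ)^m * g s ψ) ^ 2 = (1+ψ)^(2*m) * g s ψ ^ 2 := by ring
    _ ≤ (1+ψ)^(2*m) * ((1 / L + 1) * ∫ σ in (0:ℝ)..L, (g σ ψ ^ 2 + dS 1 g σ ψ ^ 2)) := by gcongr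
    _ = (1 / L + 1) * ((1+ψ)^(2*m) * ∫ σ in (0:ℝ)..L, (g σ ψ ^ 2 + dS 1 g σ ψ ^ 2)) := by ring
    _ ≤ (1 / L + 1) * (2 * ∫ p in Ioc 0 L ×ˢ Ioi 0, H p) := by
      refine mul_le_mul_of_nonneg_left ?_ hL'
      linarith
    _ = _ := by ring

lemma X_sup {L : ℝ} (hL : 0 < L) {m m' : ℕ} (hm : m ≤ m') {h : ℝ → ℝ → ℝ} (hh : Smooth2 h)
    (hp : PeriodicS L h)
    (i1 : ∀ k ≤ 2, FiniteL2 L (wt m (dS k h))) (i2 : ∀ k ≤ 2, FiniteL2 L (wt m (dPsi 1 (dS k h))))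
    {j : ℕ} (hj : j ≤ 1) (s ψ : ℝ) (hψ : 0 ≤ ψ) :
    (1+ψ)^m * |dS j h s ψ| ≤ 2 * (1 / L + 1) * Xnorm L 2 m' h := by
  have hL' : 1 ≤ 1 / L + 1 := by
    have : 0 < 1 / L := by positivity
    linarith
  have e := dS_succ j h
  have key := sobolev2 hL (m := m) (hh.dS_all j) (hp.dS_all j) (i1 j (by omega))
    (e ▸ i1 (j+1) (by omega)) (i2 j (by omega)) (e ▸ i2 (j+1) (by omega)) s ψ hψ
  rw [← e] at key
  have a1 := XnormSq_ge (L := L) (n := 2) (m := m') (k := j) (m' := m) h (by omega) hm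
  have a2 := XnormSq_ge (L := L) (n := 2) (m := m') (k := j+1) (m' := m) h (by omega) hm
  have n1 := L2sq_nonneg L (wt m (dPsi 2 (dS j h)))
  have n2 := L2sq_nonneg L (wt m (dPsi 2 (dS (j+1) h)))
  have n3 := L2sq_nonneg L (wt m (dS (j+1) h))
  have n4 := L2sq_nonneg L (wt m (dS (j+1+1) h))
  rw [← Xnorm_sq] at a1 a2
  set X := Xnorm L 2 m' h
  have hX : 0 ≤ X := Xnorm_nonneg _ _ _ _
  have hw : 0 ≤ (1+ψ)^m := by positivity
  rw [← abs_of_nonneg hw, ← abs_mul]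
  refine abs_le_of_sq_le_sq ?_ (by positivity)
  calc _ ≤ _ := key
    _ ≤ (2 * (1 / L + 1)) * (2 * X ^ 2) := by
      refine mul_le_mul_of_nonneg_left ?_ (by positivity)
      linarith
    _ ≤ (2 * (1 / L + 1)) * (2 * X ^ 2) * (1 / L + 1) := le_mul_of_one_le_right (by positivity) hL'
    _ = _ := by ring

/-- Second-order jets of functions of one variable. -/
structure Jet (f f1 f2 : ℝ → ℝ) : Prop where
  d1 : ∀ s, HasDerivAt f (f1 s) s
  d2 : ∀ s, HasDerivAt f1 (f2 s) s

lemma Jet.mul {f f1 f2 g g1 g2 : ℝ → ℝ} (hf : Jet f f1 f2) (hg : Jet g g1 g2) :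
    Jet (fun s => f s * g s) (fun s => f1 s * g s + f s * g1 s)
      (fun s => f2 s * g s + 2 * (f1 s * g1 s) + f s * g2 s) where
  d1 s := (hf.d1 s).fun_mul (hg.d1 s)
  d2 s := by
    refine (((hf.d2 s).fun_mul (hg.d1 s)).fun_add ((hf.d1 s).fun_mul (hg.d2 s))).congr_deriv ?_
    ring

lemma Jet.lin {f f1 f2 g g1 g2 : ℝ → ℝ} (hf : Jet f f1 f2) (hg : Jet g g1 g2) (a b : ℝ) :
    Jet (fun s => a * f s + b * g s) (fun s => a * f1 s + b * g1 s)
      (fun s => a * f2 s + b * g2 s) where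
  d1 s := ((hf.d1 s).const_mul a).fun_add ((hg.d1 s).const_mul b)
  d2 s := ((hf.d2 s).const_mul a).fun_add ((hg.d2 s).const_mul b)

lemma Jet.inv {f f1 f2 : ℝ → ℝ} (hf : Jet f f1 f2) (h0 : ∀ s, f s ≠ 0) :
    Jet (fun s => (f s)⁻¹) (fun s => -f1 s * ((f s)⁻¹) ^ 2)
      (fun s => -f2 s * ((f s)⁻¹)^2 + 2 * f1 s ^ 2 * ((f s)⁻¹) ^ 3) where
  d1 s := by
    refine ((hf.d1 s).fun_inv (h0 s)).congr_deriv ?_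
    field_simp
  d2 s := by
    have e := (hf.d1 s).fun_inv (h0 s)
    refine ((hf.d2 s).fun_neg.fun_mul (e.fun_pow 2)).congr_deriv ?_
    have := h0 s
    simp only [Nat.add_one_sub_one, pow_one, Nat.cast_ofNat]
    field_simp

lemma Jet.iter {f f1 f2 : ℝ → ℝ} (hf : Jet f f1 f2) :
    iteratedDeriv 0 f = f ∧ iteratedDeriv 1 f = f1 ∧ iteratedDeriv 2 f = f2 := by
  have e1 : deriv f = f1 := funext fun s => (hf.d1 s).deriv
  have e2 : deriv f1 = f2 := funext fun s => (hf.d2 s).deriv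
  refine ⟨iteratedDeriv_zero, by rw [iteratedDeriv_one, e1], ?_⟩
  rw [iteratedDeriv_succ, iteratedDeriv_one, e1, e2]

lemma Smooth2.jet {h : ℝ → ℝ → ℝ} (hh : Smooth2 h) (ψ : ℝ) :
    Jet (fun s => h s ψ) (fun s => dS 1 h s ψ) (fun s => dS 2 h s ψ) where
  d1 s := hasDeriv_dS hh s ψ
  d2 s := by
    rw [dS_succ 1 h]
    exact hasDeriv_dS hh.dS_one s ψ

/-- pointwise bounds for a 2-jet -/
def JB (A r x x1 x2 : ℝ) : Prop := |x| ≤ A ∧ |x1| ≤ A ∧ |x2| ≤ A * (1 + r)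

lemma JB.mul {A B r t x x1 x2 y y1 y2 : ℝ} (hr : 0 ≤ r) (ht : 0 ≤ t)
    (hx : JB A r x x1 x2) (hy : JB B t y y1 y2) :
    JB (4 * A * B) (r + t) (x * y) (x1 * y + x * y1) (x2 * y + 2 * (x1 * y1) + x * y2) := by
  obtain ⟨a0, a1, a2⟩ := hx
  obtain ⟨b0, b1, b2⟩ := hy
  have hA : 0 ≤ A := (abs_nonneg _).trans a0
  have hB : 0 ≤ B := (abs_nonneg _).trans b0
  have hAB := mul_nonneg hA hB
  have p00 : |x * y| ≤ A * B := by rw [abs_mul]; gcongr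
  have p10 : |x1 * y| ≤ A * B := by rw [abs_mul]; gcongr
  have p01 : |x * y1| ≤ A * B := by rw [abs_mul]; gcongr
  have p11 : |x1 * y1| ≤ A * B := by rw [abs_mul]; gcongr
  have p20 : |x2 * y| ≤ A * (1 + r) * B := by rw [abs_mul]; gcongr
  have p02 : |x * y2| ≤ A * (B * (1 + t)) := by rw [abs_mul]; gcongr
  have q1 := mul_nonneg hAB hr
  have q2 := mul_nonneg hAB ht
  refine ⟨by nlinarith, ?_, ?_⟩
  · have := abs_add_le (x1 * y) (x * y1)
    nlinarith
  · have := abs_add_three (x2 * y) (2 * (x1 * y1)) (x * y2)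
    rw [abs_mul 2, abs_two] at this
    nlinarith

lemma JB.inv {A c r x x1 x2 : ℝ} (hr : 0 ≤ r) (hA : 0 ≤ A) (hc : 0 < c) (hx : c ≤ x)
    (h1 : |x1| ≤ A) (h2 : |x2| ≤ A * (1 + r)) :
    JB (c⁻¹ + A * c⁻¹ ^ 2 + 2 * A ^ 2 * c⁻¹ ^ 3) r x⁻¹ (-x1 * x⁻¹ ^ 2)
      (-x2 * x⁻¹ ^ 2 + 2 * x1 ^ 2 * x⁻¹ ^ 3) := by
  have hx0 : 0 < x := hc.trans_le hx
  have hi : x⁻¹ ≤ c⁻¹ := inv_anti₀ hc hx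
  have hi0 : 0 < x⁻¹ := inv_pos.2 hx0
  have hc0 : 0 < c⁻¹ := inv_pos.2 hc
  have b1 : 0 ≤ A * c⁻¹ ^ 2 := by positivity
  have b2 : 0 ≤ 2 * A ^ 2 * c⁻¹ ^ 3 := by positivity
  have p1 : |-x1 * x⁻¹ ^ 2| ≤ A * c⁻¹ ^ 2 := by
    rw [abs_mul, abs_neg, abs_of_nonneg (pow_nonneg hi0.le 2)]; gcongr
  have p2 : |-x2 * x⁻¹ ^ 2| ≤ A * (1 + r) * c⁻¹ ^ 2 := by
    rw [abs_mul, abs_neg, abs_of_nonneg (pow_nonneg hi0.le 2)]; gcongr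
  have p3 : |2 * x1 ^ 2 * x⁻¹ ^ 3| ≤ 2 * A ^ 2 * c⁻¹ ^ 3 := by
    rw [abs_mul, abs_mul, abs_two, abs_pow, abs_of_nonneg (pow_nonneg hi0.le 3)]; gcongr
  refine ⟨?_, ?_, ?_⟩
  · rw [abs_of_pos hi0]; linarith
  · linarith
  · have := abs_add_le (-x2 * x⁻¹ ^ 2) (2 * x1 ^ 2 * x⁻¹ ^ 3)
    have q1 : 0 ≤ c⁻¹ * r := by positivity
    have q2 : 0 ≤ 2 * A ^ 2 * c⁻¹ ^ 3 * r := by positivity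
    nlinarith

lemma frac_aux (p r q α β : ℝ) (hx : α * q + p ≠ 0) (hy : β * q + r ≠ 0) :
    p / (α * q + p) - r / (β * q + r)
      = q * (α * q + p)⁻¹ * (β * q + r)⁻¹ * (β * (p - r) + (β - α) * r) := by
  obtain ⟨x, hx'⟩ : ∃ x, x = α * q + p := ⟨_, rfl⟩
  obtain ⟨y, hy'⟩ : ∃ y, y = β * q + r := ⟨_, rfl⟩
  rw [← hx'] at hx
  rw [← hy'] at hy
  rw [← hx', ← hy']
  field_simp
  subst hx' hy'
  ring

lemma final_bound {V r t v v1 v2 g g1 g2 G0 G1 G2 : ℝ} (hV : 0 ≤ V) (hr : 0 ≤ r) (ht : 0 ≤ t)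
    (n0 : 0 ≤ G0) (n1 : 0 ≤ G1) (n2 : 0 ≤ G2)
    (v0 : |v| ≤ V) (hv1 : |v1| ≤ V) (hv2 : |v2| ≤ V * (1 + (r + t)))
    (g0 : |g| ≤ 4 * G0) (hg1 : |g1| ≤ 4 * G1) (hg2 : |g2| ≤ 4 * G2) :
    |v * g| ≤ 8 * V * G0 ∧ |v1 * g + v * g1| ≤ 8 * V * (G0 + G1) ∧
    |v2 * g + 2 * (v1 * g1) + v * g2| ≤ 8 * V * (G0 + G1 + G2 + G0 * (r + t)) := by
  have pr : ∀ {x y a b : ℝ}, |x| ≤ a → |y| ≤ b → |x * y| ≤ a * b := by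
    intro x y a b hx hy
    rw [abs_mul]
    exact mul_le_mul hx hy (abs_nonneg _) ((abs_nonneg _).trans hx)
  have m00 := mul_nonneg hV n0
  have m01 := mul_nonneg hV n1
  have m02 := mul_nonneg hV n2
  refine ⟨(pr v0 g0).trans (by nlinarith), ?_, ?_⟩
  · refine (abs_add_le _ _).trans ((add_le_add (pr hv1 g0) (pr v0 hg1)).trans (by nlinarith))
  · refine (abs_add_three _ _ _).trans ?_
    rw [abs_mul 2, abs_two]
    have h1 := pr hv2 g0
    have h2 := pr hv1 hg1
    have h3 := pr v0 hg2
    have h4 := mul_nonneg m00 (add_nonneg hr ht)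
    have e1 : V * (1 + (r + t)) * (4 * G0) = 4 * (V * G0) + 4 * (V * G0 * (r + t)) := by ring
    have e2 : 8 * V * (G0 + G1 + G2 + G0 * (r + t)) = 8 * (V * G0) + 8 * (V * G1) + 8 * (V * G2)
      + 8 * (V * G0 * (r + t)) := by ring
    rw [e1] at h1
    rw [e2]
    linarith

lemma U_pointwise (c A : ℝ) (hc : 0 < c) (hA : 0 ≤ A) :
    ∃ C : ℝ, 0 < C ∧ ∀ (α β κ : ℝ) (q q1 q2 P P1 P2 R R1 R2 d d1 d2 : ℝ → ℝ),
      Jet q q1 q2 → Jet P P1 P2 → Jet R R1 R2 → Jet d d1 d2 → (∀ s, d s = P s - R s) →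
      |α| ≤ 4 → |β| ≤ 4 → β - α = κ → (∀ s, c ≤ α * q s + P s) → (∀ s, c ≤ β * q s + R s) →
      ∀ s, |q s| ≤ A → |q1 s| ≤ A → |q2 s| ≤ A → |P1 s| ≤ A → |R1 s| ≤ A →
      (|iteratedDeriv 0 (fun s => P s / (α * q s + P s) - R s / (β * q s + R s)) s|
        ≤ C * (|d s| + |κ| * |R s|)) ∧
      (|iteratedDeriv 1 (fun s => P s / (α * q s + P s) - R s / (β * q s + R s)) s|
        ≤ C * ((|d s| + |κ| * |R s|) + (|d1 s| + |κ| * |R1 s|))) ∧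
      (|iteratedDeriv 2 (fun s => P s / (α * q s + P s) - R s / (β * q s + R s)) s|
        ≤ C * ((|d s| + |κ| * |R s|) + (|d1 s| + |κ| * |R1 s|) + (|d2 s| + |κ| * |R2 s|)
            + (|d s| + |κ| * |R s|) * (|P2 s| + |R2 s|))) := by
  set A' := 5 * A + 1 with hA'
  have hA'0 : 0 ≤ A' := by positivity
  set B := c⁻¹ + A' * c⁻¹ ^ 2 + 2 * A' ^ 2 * c⁻¹ ^ 3 with hB
  have hB0 : 0 < B := by positivity
  set V := 4 * (4 * A' * B) * B with hV
  have hV0 : 0 < V := by positivity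
  refine ⟨8 * V, by positivity, ?_⟩
  intro α β κ q q1 q2 P P1 P2 R R1 R2 d d1 d2 jq jP jR jd hd hα hβ hκ hDP hDR s b0 b1 b2 bP bR
  have jDP := jq.lin jP α 1
  have jDR := jq.lin jR β 1
  have hDP' : ∀ s, c ≤ α * q s + 1 * P s := fun s => by simpa using hDP s
  have hDR' : ∀ s, c ≤ β * q s + 1 * R s := fun s => by simpa using hDR s
  have jE := jDP.inv (fun s => (hc.trans_le (hDP' s)).ne')
  have jF := jDR.inv (fun s => (hc.trans_le (hDR' s)).ne')
  have jG := jd.lin jR β κ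
  have jall := ((jq.mul jE).mul jF).mul jG
  have efun : (fun s => P s / (α * q s + P s) - R s / (β * q s + R s))
      = (fun s => q s * (α * q s + 1 * P s)⁻¹ * (β * q s + 1 * R s)⁻¹ * (β * d s + κ * R s)) := by
    funext s
    have h1 := (hc.trans_le (hDP s)).ne'
    have h2 := (hc.trans_le (hDR s)).ne'
    rw [hd s, ← hκ]
    simp only [one_mul]
    exact frac_aux _ _ _ _ _ h1 h2
  have lin : ∀ {a x y z : ℝ}, |a| ≤ 4 → |x| ≤ A → |y| ≤ z → |a * x + 1 * y| ≤ 4 * A + z := by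
    intro a x y z ha hx hy
    have := abs_add_le (a * x) (1 * y)
    rw [abs_mul, one_mul] at this
    have : |a| * |x| ≤ 4 * A := by gcongr
    rw [one_mul] at *
    linarith
  have hr := abs_nonneg (P2 s)
  have ht := abs_nonneg (R2 s)
  have BE := JB.inv (r := |P2 s|) hr hA'0 hc (hDP' s) (x1 := α * q1 s + 1 * P1 s)
    (x2 := α * q2 s + 1 * P2 s) ((lin hα b1 bP).trans (by linarith))
    ((lin hα b2 le_rfl).trans (by nlinarith [mul_nonneg hA hr]))
  have BF := JB.inv (r := |R2 s|) ht hA'0 hc (hDR' s) (x1 := β * q1 s + 1 * R1 s)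
    (x2 := β * q2 s + 1 * R2 s) ((lin hβ b1 bR).trans (by linarith))
    ((lin hβ b2 le_rfl).trans (by nlinarith [mul_nonneg hA ht]))
  have Bq : JB A' 0 (q s) (q1 s) (q2 s) :=
    ⟨by linarith, by linarith, by linarith⟩
  have BV := (Bq.mul le_rfl hr BE).mul (by positivity) ht BF
  rw [zero_add] at BV
  rw [← hB, ← hV] at BV
  obtain ⟨v0, v1, v2⟩ := BV
  obtain ⟨k0, k1, k2⟩ := jall.iter
  rw [efun, k0, k1, k2]
  have G : ∀ x y : ℝ, |β * x + κ * y| ≤ 4 * (|x| + |κ| * |y|) := by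
    intro x y
    have := abs_add_le (β * x) (κ * y)
    rw [abs_mul, abs_mul] at this
    have h1 : |β| * |x| ≤ 4 * |x| := by gcongr
    have h2 : 0 ≤ |κ| * |y| := by positivity
    linarith
  have g0 := G (d s) (R s)
  have g1 := G (d1 s) (R1 s)
  have g2 := G (d2 s) (R2 s)
  have n0 : 0 ≤ |d s| + |κ| * |R s| := by positivity
  have n1 : 0 ≤ |d1 s| + |κ| * |R1 s| := by positivity
  have n2 : 0 ≤ |d2 s| + |κ| * |R2 s| := by positivity
  exact final_bound hV0.le hr ht n0 n1 n2 v0 v1 v2 g0 g1 g2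

lemma periodic_bdd {L : ℝ} (hL : 0 < L) {f : ℝ → ℝ} (hf : Continuous f)
    (hp : Function.Periodic f L) : ∃ B : ℝ, 0 < B ∧ ∀ s, |f s| ≤ B := by
  obtain ⟨B, hB⟩ := (isCompact_Icc (a := (0:ℝ)) (b := L)).exists_bound_of_continuousOn hf.continuousOn
  refine ⟨|B| + 1, by positivity, fun s => ?_⟩
  obtain ⟨y, hy, e⟩ := hp.exists_mem_Ico₀ hL s
  rw [e]
  have := hB y ⟨hy.1, hy.2.le⟩
  rw [Real.norm_eq_abs] at this
  have := le_abs_self B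
  linarith

lemma XFinite.diff {L : ℝ} {g h : ℝ → ℝ → ℝ} (hg : Smooth2 g) (hh : Smooth2 h)
    (ig : XFinite L 2 50 g) (ih : XFinite L 2 50 h) {m k : ℕ} (hm : m ≤ 50) (hk : k ≤ 2) :
    FiniteL2 L (wt m (dS k (fun s ψ => g s ψ - h s ψ))) ∧
    FiniteL2 L (wt m (dPsi 1 (dS k (fun s ψ => g s ψ - h s ψ)))) := by
  rw [dS_sub hg hh, dPsi_sub (hg.dS_all k) (hh.dS_all k)]
  exact ⟨FiniteL2.sub' (hg.dS_all k) (hh.dS_all k) (ig k hk m hm).1 (ih k hk m hm).1,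
    FiniteL2.sub' (hg.dS_all k).dPsi_one (hh.dS_all k).dPsi_one
      (ig k hk m hm).2.2.1 (ih k hk m hm).2.2.1⟩

lemma L2sq_le_X {L : ℝ} {n m k m' : ℕ} (h : ℝ → ℝ → ℝ) (hk : k ≤ n) (hm : m' ≤ m) :
    L2sq L (wt m' (dS k h)) ≤ Xnorm L n m h ^ 2 := by
  have := XnormSq_ge (L := L) h hk hm
  rw [Xnorm_sq]
  have := L2sq_nonneg L (wt m' (dS (k+1) h))
  have := L2sq_nonneg L (wt m' (dPsi 1 (dS k h)))
  have := L2sq_nonneg L (wt m' (dPsi 2 (dS k h)))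
  linarith

lemma sq_bound {C N w u κ d0 d1 d2 R0 R1 R2 P r : ℝ} (hC : 0 ≤ C) (hw : 0 ≤ w)
    (hN : w * (|d0| + |κ| * |R0|) ≤ N)
    (hu : |u| ≤ C * ((|d0| + |κ| * |R0|) + (|d1| + |κ| * |R1|) + (|d2| + |κ| * |R2|)
            + (|d0| + |κ| * |R0|) * (|P| + |r|))) :
    (w * u) ^ 2 ≤ 8 * C ^ 2 * ((w * d0) ^ 2 + (w * d1) ^ 2 + (w * d2) ^ 2
      + κ ^ 2 * ((w * R0) ^ 2 + (w * R1) ^ 2 + (w * R2) ^ 2) + N ^ 2 * (P ^ 2 + r ^ 2)) := by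
  have h1 : |w * u| ≤ C * (w * |d0| + |κ| * (w * |R0|) + w * |d1| + |κ| * (w * |R1|) + w * |d2|
      + |κ| * (w * |R2|) + N * |P| + N * |r|) := by
    rw [abs_mul, abs_of_nonneg hw]
    have h2 : w * (|d0| + |κ| * |R0|) * (|P| + |r|) ≤ N * (|P| + |r|) := by gcongr
    calc w * |u| ≤ w * (C * ((|d0| + |κ| * |R0|) + (|d1| + |κ| * |R1|) + (|d2| + |κ| * |R2|)
            + (|d0| + |κ| * |R0|) * (|P| + |r|))) := by gcongr
      _ = C * (w * |d0| + |κ| * (w * |R0|) + w * |d1| + |κ| * (w * |R1|) + w * |d2|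
      + |κ| * (w * |R2|) + w * (|d0| + |κ| * |R0|) * (|P| + |r|)) := by ring
      _ ≤ _ := mul_le_mul_of_nonneg_left (by linarith) hC
  have cs : ∀ a b c d e f g h : ℝ, (a + b + c + d + e + f + g + h) ^ 2
      ≤ 8 * (a^2 + b^2 + c^2 + d^2 + e^2 + f^2 + g^2 + h^2) := by
    intro a b c d e f g h
    have h2 : ∀ x y : ℝ, (x + y) ^ 2 ≤ 2 * (x ^ 2 + y ^ 2) := fun x y => by
      nlinarith [sq_nonneg (x - y)]
    have := h2 (a + b + c + d) (e + f + g + h)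
    have := h2 (a + b) (c + d)
    have := h2 (e + f) (g + h)
    have := h2 a b
    have := h2 c d
    have := h2 e f
    have := h2 g h
    calc (a + b + c + d + e + f + g + h) ^ 2 = (a + b + c + d + (e + f + g + h)) ^ 2 := by ring
      _ ≤ 2 * ((a + b + c + d) ^ 2 + (e + f + g + h) ^ 2) := h2 _ _
      _ = 2 * ((a + b + (c + d)) ^ 2 + (e + f + (g + h)) ^ 2) := by ring
      _ ≤ _ := by linarith
  have h3 := cs (w * |d0|) (|κ| * (w * |R0|)) (w * |d1|) (|κ| * (w * |R1|)) (w * |d2|)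
      (|κ| * (w * |R2|)) (N * |P|) (N * |r|)
  simp only [mul_pow, sq_abs] at h3
  calc (w * u) ^ 2 = |w * u| ^ 2 := (sq_abs _).symm
    _ ≤ (C * (w * |d0| + |κ| * (w * |R0|) + w * |d1| + |κ| * (w * |R1|) + w * |d2|
      + |κ| * (w * |R2|) + N * |P| + N * |r|)) ^ 2 := by gcongr
    _ = C ^ 2 * (w * |d0| + |κ| * (w * |R0|) + w * |d1| + |κ| * (w * |R1|) + w * |d2|
      + |κ| * (w * |R2|) + N * |P| + N * |r|) ^ 2 := by ring
    _ ≤ C ^ 2 * _ := mul_le_mul_of_nonneg_left h3 (sq_nonneg C)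
    _ = _ := by ring

/-- integrated version of `sq_bound` -/
lemma L2_bound {L C N κ : ℝ} {m : ℕ} {u d0 d1 d2 R0 R1 R2 P r : ℝ → ℝ → ℝ} (hC : 0 ≤ C)
    (id0 : FiniteL2 L (wt m d0)) (id1 : FiniteL2 L (wt m d1)) (id2 : FiniteL2 L (wt m d2))
    (iR0 : FiniteL2 L (wt m R0)) (iR1 : FiniteL2 L (wt m R1)) (iR2 : FiniteL2 L (wt m R2))
    (iP : FiniteL2 L (wt 0 P)) (ir : FiniteL2 L (wt 0 r))
    (hN : ∀ s ψ, 0 ≤ ψ → (1+ψ)^m * (|d0 s ψ| + |κ| * |R0 s ψ|) ≤ N)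
    (hu : ∀ s ψ, 0 ≤ ψ → |u s ψ| ≤ C * ((|d0 s ψ| + |κ| * |R0 s ψ|) + (|d1 s ψ| + |κ| * |R1 s ψ|)
            + (|d2 s ψ| + |κ| * |R2 s ψ|)
            + (|d0 s ψ| + |κ| * |R0 s ψ|) * (|P s ψ| + |r s ψ|))) :
    L2sq L (wt m u) ≤ 8 * C ^ 2 * (L2sq L (wt m d0) + L2sq L (wt m d1) + L2sq L (wt m d2)
      + κ ^ 2 * (L2sq L (wt m R0) + L2sq L (wt m R1) + L2sq L (wt m R2))
      + N ^ 2 * (L2sq L (wt 0 P) + L2sq L (wt 0 r))) := by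
  set S : Set (ℝ × ℝ) := Ioc (0:ℝ) L ×ˢ Ioi (0:ℝ) with hS
  have J1 := Integrable.add (Integrable.add id0 id1) id2
  have J2 := Integrable.add (Integrable.add iR0 iR1) iR2
  have J3 := Integrable.add iP ir
  have J := ((J1.add (J2.const_mul (κ ^ 2))).add (J3.const_mul (N ^ 2))).const_mul (8 * C ^ 2)
  have e : 8 * C ^ 2 * (L2sq L (wt m d0) + L2sq L (wt m d1) + L2sq L (wt m d2)
      + κ ^ 2 * (L2sq L (wt m R0) + L2sq L (wt m R1) + L2sq L (wt m R2))
      + N ^ 2 * (L2sq L (wt 0 P) + L2sq L (wt 0 r))) = ∫ p in S, 8 * C ^ 2 *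
      ((wt m d0 p.1 p.2 ^ 2 + wt m d1 p.1 p.2 ^ 2 + wt m d2 p.1 p.2 ^ 2)
      + κ ^ 2 * (wt m R0 p.1 p.2 ^ 2 + wt m R1 p.1 p.2 ^ 2 + wt m R2 p.1 p.2 ^ 2)
      + N ^ 2 * (wt 0 P p.1 p.2 ^ 2 + wt 0 r p.1 p.2 ^ 2)) := by
    refine Eq.trans ?_ (integral_const_mul (8 * C ^ 2) _).symm
    congr 1
    refine Eq.trans ?_ (integral_add (J1.add (J2.const_mul (κ ^ 2))) (J3.const_mul (N ^ 2))).symm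
    congr 1
    · refine Eq.trans ?_ (integral_add J1 (J2.const_mul (κ ^ 2))).symm
      congr 1
      · refine Eq.trans ?_ (integral_add (Integrable.add id0 id1) id2).symm
        congr 1
        exact (integral_add id0 id1).symm
      · refine Eq.trans ?_ (integral_const_mul (κ ^ 2) _).symm
        congr 1
        refine Eq.trans ?_ (integral_add (Integrable.add iR0 iR1) iR2).symm
        congr 1
        exact (integral_add iR0 iR1).symm
    · refine Eq.trans ?_ (integral_const_mul (N ^ 2) _).symm
      congr 1
      exact (integral_add iP ir).symm
  rw [e]
  refine integral_mono_of_nonneg (Eventually.of_forall fun p => sq_nonneg _) J ?_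
  refine (ae_restrict_iff' (measurableSet_Ioc.prod measurableSet_Ioi)).2
    (Eventually.of_forall fun p hp => ?_)
  have hp2 : 0 ≤ p.2 := le_of_lt hp.2
  have := sq_bound hC (w := (1 + p.2) ^ m) (by positivity) (hN p.1 p.2 hp2) (hu p.1 p.2 hp2)
  refine this.trans (le_of_eq ?_)
  simp only [wt, pow_zero, one_mul]

set_option maxHeartbeats 2000000 in
/-- **Stability of the auxiliary quantity `U = Q/(ω²q_e² + Q)` in differences.** -/
theorem U_difference_estimates
    (L : ℝ) (hL : 0 < L)
    (q_e : ℝ → ℝ) (hqe : ContDiff ℝ (⊤ : ℕ∞) q_e) (hqeper : Function.Periodic q_e L)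
    (hqepos : ∀ s, 0 < q_e s)
    (C₀ : ℝ) (hC₀ : 0 < C₀) :
    ∃ ε₀ : ℝ, 0 < ε₀ ∧ ε₀ < 1 ∧ ∃ C > (0:ℝ),
      ∀ ε : ℝ, 0 < ε → ε < ε₀ →
      ∀ ω₁ ω₂ ωbar₁ ωbar₂ : ℝ,
        1/2 ≤ ω₁ → ω₁ ≤ 2 → 1/2 ≤ ω₂ → ω₂ ≤ 2 →
        ω₁ ^ 2 = 1 - ε * ωbar₁ → ω₂ ^ 2 = 1 - ε * ωbar₂ →
        |ωbar₁| ≤ C₀ → |ωbar₂| ≤ C₀ →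
      ∀ Q₁ Q₂ : ℝ → ℝ → ℝ,
        Smooth2 Q₁ → PeriodicS L Q₁ → XFinite L 2 50 Q₁ →
        Xnorm L 2 50 Q₁ ≤ ε ^ (0.99 : ℝ) →
        Smooth2 Q₂ → PeriodicS L Q₂ → XFinite L 2 50 Q₂ →
        Xnorm L 2 50 Q₂ ≤ ε ^ (0.99 : ℝ) →
      ∀ m : ℕ, m ≤ 50 →
        -- L∞ bound (stated pointwise) for ∂_s^j (U₁ − U₂), j = 0, 1
        (∀ s : ℝ, ∀ ψ ≥ (0:ℝ),
          (∑ j ∈ Finset.range 2, (1+ψ)^m *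
            |dS j (fun s' ψ' => Q₁ s' ψ' / (ω₁ ^ 2 * (q_e s') ^ 2 + Q₁ s' ψ')
              - Q₂ s' ψ' / (ω₂ ^ 2 * (q_e s') ^ 2 + Q₂ s' ψ')) s ψ|)
            ≤ C * (Xnorm L 2 m (fun s' ψ' => Q₁ s' ψ' - Q₂ s' ψ')
                + ε ^ (1.99 : ℝ) * |ωbar₁ - ωbar₂|)) ∧
        -- L² bound for ∂_s^j (U₁ − U₂), j = 0, 1, 2
        ((∑ j ∈ Finset.range 3,
            Real.sqrt (L2sq L (wt m
              (dS j (fun s' ψ' => Q₁ s' ψ' / (ω₁ ^ 2 * (q_e s') ^ 2 + Q₁ s' ψ')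
                - Q₂ s' ψ' / (ω₂ ^ 2 * (q_e s') ^ 2 + Q₂ s' ψ'))))))
            ≤ C * (Xnorm L 2 m (fun s' ψ' => Q₁ s' ψ' - Q₂ s' ψ')
                + ε ^ (1.99 : ℝ) * |ωbar₁ - ωbar₂|)) := by
  have hqs : Smooth2 (fun s _ => q_e s ^ 2) := by
    unfold Smooth2
    exact (hqe.comp contDiff_fst).pow 2
  have hqp : PeriodicS L (fun s _ => q_e s ^ 2) := by
    intro ψ s
    simp only [hqeper s]
  obtain ⟨B0, hB0, hb0⟩ := periodic_bdd hL (f := fun s => q_e s ^ 2) (hqe.continuous.pow 2) (hqp 0)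
  obtain ⟨B1, hB1, hb1⟩ := periodic_bdd hL (f := fun s => dS 1 (fun s _ => q_e s ^ 2) s 0)
    ((ContDiff.continuous (hqs.dS_all 1)).comp (by fun_prop : Continuous fun s : ℝ => (s, (0:ℝ))))
    ((hqp.dS_all 1) 0)
  obtain ⟨B2, hB2, hb2⟩ := periodic_bdd hL (f := fun s => dS 2 (fun s _ => q_e s ^ 2) s 0)
    ((ContDiff.continuous (hqs.dS_all 2)).comp (by fun_prop : Continuous fun s : ℝ => (s, (0:ℝ))))
    ((hqp.dS_all 2) 0)
  obtain ⟨B3, hB3, hb3⟩ := periodic_bdd hL (f := fun s => (q_e s ^ 2)⁻¹)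
    ((hqe.continuous.pow 2).inv₀ fun s => (pow_pos (hqepos s) 2).ne')
    (fun s => by simp only [hqeper s])
  have hlow : ∀ s, B3⁻¹ ≤ q_e s ^ 2 := by
    intro s
    have h1 := pow_pos (hqepos s) 2
    have := hb3 s
    rw [abs_of_pos (inv_pos.2 h1)] at this
    exact inv_le_of_inv_le₀ h1 this
  set K := 2 * (1 / L + 1) with hK
  have hK0 : 0 < K := by positivity
  obtain ⟨C, hC, hU⟩ := U_pointwise (B3⁻¹ / 8) (B0 + B1 + B2 + K) (by positivity) (by positivity)
  set η := B3⁻¹ / 8 / K with hη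
  have hη0 : 0 < η := by positivity
  refine ⟨min (1/2) (η ^ (1/0.99 : ℝ)), lt_min (by norm_num) (by positivity),
    (min_le_left _ _).trans_lt (by norm_num), 24 * C * (1 + K), by positivity, ?_⟩
  intro ε hε hε0 ω₁ ω₂ b₁ b₂ h1l h1u h2l h2u hω1 hω2 _ _ Q₁ Q₂ s1 p1 f1 x1 s2 p2 f2 x2 m hm
  have hεη : ε ^ (0.99 : ℝ) ≤ η := by
    calc ε ^ (0.99 : ℝ) ≤ (η ^ (1/0.99 : ℝ)) ^ (0.99 : ℝ) :=
          Real.rpow_le_rpow hε.le (hε0.le.trans (min_le_right _ _)) (by norm_num)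
      _ = η := by rw [← Real.rpow_mul hη0.le]; norm_num
  have hε1 : ε ^ (0.99 : ℝ) ≤ 1 :=
    Real.rpow_le_one hε.le ((hε0.le.trans (min_le_left _ _)).trans (by norm_num)) (by norm_num)
  have hεe : ε ^ (1.99 : ℝ) = ε * ε ^ (0.99 : ℝ) := by
    rw [show (1.99 : ℝ) = 1 + 0.99 by norm_num, Real.rpow_add hε, Real.rpow_one]
  have hεp : 0 < ε ^ (0.99 : ℝ) := by positivity
  set d : ℝ → ℝ → ℝ := fun s' ψ' => Q₁ s' ψ' - Q₂ s' ψ' with hd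
  have sd : Smooth2 d := s1.sub' s2
  have pd : PeriodicS L d := by
    intro ψ s
    have e1 := p1 ψ s
    have e2 := p2 ψ s
    simp only at e1 e2
    simp only [hd, e1, e2]
  have fd : ∀ k ≤ 2, FiniteL2 L (wt m (dS k d)) ∧ FiniteL2 L (wt m (dPsi 1 (dS k d))) :=
    fun k hk => XFinite.diff s1 s2 f1 f2 hm hk
  have sup1 : ∀ j ≤ 1, ∀ s ψ, 0 ≤ ψ → |dS j Q₁ s ψ| ≤ K * ε ^ (0.99 : ℝ) := by
    intro j hj s ψ hψ
    have := X_sup hL (m := 0) (m' := 50) (by norm_num) s1 p1 (fun k hk => (f1 k hk 0 (by norm_num)).1)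
      (fun k hk => (f1 k hk 0 (by norm_num)).2.2.1) hj s ψ hψ
    rw [pow_zero, one_mul] at this
    exact this.trans (by gcongr)
  have sup2m : ∀ j ≤ 1, ∀ s ψ, 0 ≤ ψ → ∀ n ≤ 50, (1+ψ)^n * |dS j Q₂ s ψ| ≤ K * ε ^ (0.99 : ℝ) := by
    intro j hj s ψ hψ n hn
    have := X_sup hL (m := n) (m' := 50) hn s2 p2 (fun k hk => (f2 k hk n hn).1)
      (fun k hk => (f2 k hk n hn).2.2.1) hj s ψ hψ
    exact this.trans (by gcongr)
  have sup2 : ∀ j ≤ 1, ∀ s ψ, 0 ≤ ψ → |dS j Q₂ s ψ| ≤ K * ε ^ (0.99 : ℝ) := by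
    intro j hj s ψ hψ
    simpa using sup2m j hj s ψ hψ 0 (by norm_num)
  have supd : ∀ j ≤ 1, ∀ s ψ, 0 ≤ ψ → (1+ψ)^m * |dS j d s ψ| ≤ K * Xnorm L 2 m d := by
    intro j hj s ψ hψ
    exact X_sup hL (m := m) (m' := m) le_rfl sd pd (fun k hk => (fd k hk).1)
      (fun k hk => (fd k hk).2) hj s ψ hψ
  have hKη : K * ε ^ (0.99 : ℝ) ≤ B3⁻¹ / 8 := by
    calc K * ε ^ (0.99 : ℝ) ≤ K * η := by gcongr
      _ = B3⁻¹ / 8 := by rw [hη]; field_simp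
  have hK1 : K * ε ^ (0.99 : ℝ) ≤ K := mul_le_of_le_one_right hK0.le hε1
  have hD : ∀ (ω : ℝ) (Q : ℝ → ℝ → ℝ), 1/2 ≤ ω →
      (∀ j ≤ 1, ∀ s ψ, 0 ≤ ψ → |dS j Q s ψ| ≤ K * ε ^ (0.99 : ℝ)) → ∀ s ψ, 0 ≤ ψ →
      B3⁻¹ / 8 ≤ ω ^ 2 * q_e s ^ 2 + Q s ψ := by
    intro ω Q hω hQ s ψ hψ
    have h0 := hQ 0 (by norm_num) s ψ hψ
    rw [dS_zero] at h0
    have h1 := (abs_le.1 (h0.trans hKη)).1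
    have h2 : (1/2)^2 * B3⁻¹ ≤ ω ^ 2 * q_e s ^ 2 := by
      have := hlow s
      gcongr
    linarith
  have hω1' : |ω₁ ^ 2| ≤ 4 := by rw [abs_of_nonneg (sq_nonneg _)]; nlinarith
  have hω2' : |ω₂ ^ 2| ≤ 4 := by rw [abs_of_nonneg (sq_nonneg _)]; nlinarith
  set κ := ε * (b₁ - b₂) with hκ
  have hUU := fun s ψ (hψ : 0 ≤ ψ) => hU (ω₁ ^ 2) (ω₂ ^ 2) κ _ _ _ _ _ _ _ _ _ _ _ _ (hqs.jet ψ)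
    (s1.jet ψ) (s2.jet ψ) (sd.jet ψ) (fun s => rfl) hω1' hω2' (by rw [hω1, hω2, hκ]; ring)
    (fun s => hD ω₁ Q₁ h1l sup1 s ψ hψ) (fun s => hD ω₂ Q₂ h2l sup2 s ψ hψ) s
    ((hb0 s).trans (by linarith)) ((hb1 s).trans (by linarith)) ((hb2 s).trans (by linarith))
    ((sup1 1 le_rfl s ψ hψ).trans (by linarith)) ((sup2 1 le_rfl s ψ hψ).trans (by linarith))
  set X := Xnorm L 2 m d with hX
  have hX0 : 0 ≤ X := Xnorm_nonneg _ _ _ _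
  set M := X + ε ^ (1.99 : ℝ) * |b₁ - b₂| with hM
  have hκa : |κ| * ε ^ (0.99 : ℝ) = ε ^ (1.99 : ℝ) * |b₁ - b₂| := by
    rw [hκ, abs_mul, abs_of_pos hε, hεe]; ring
  have hZ0 : 0 ≤ ε ^ (1.99 : ℝ) * |b₁ - b₂| := by positivity
  have hM0 : 0 ≤ M := by positivity
  have hG : ∀ j ≤ 1, ∀ s ψ, 0 ≤ ψ → (1+ψ)^m * (|dS j d s ψ| + |κ| * |dS j Q₂ s ψ|) ≤ K * M := by
    intro j hj s ψ hψ
    have a1 := supd j hj s ψ hψ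
    have a2 := mul_le_mul_of_nonneg_left (sup2m j hj s ψ hψ m hm) (abs_nonneg κ)
    have a3 : |κ| * (K * ε ^ (0.99 : ℝ)) = K * (ε ^ (1.99 : ℝ) * |b₁ - b₂|) := by
      rw [← hκa]; ring
    rw [a3] at a2
    rw [hM, mul_add, mul_add]
    linarith
  have hG0 : ∀ s ψ, 0 ≤ ψ → (1+ψ)^m * (|d s ψ| + |κ| * |Q₂ s ψ|) ≤ K * M := by
    intro s ψ hψ
    simpa only [dS_zero] using hG 0 (by norm_num) s ψ hψ
  have hCM : 0 ≤ C * M := by positivity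
  have hCKM : 0 ≤ C * K * M := by positivity
  constructor
  · intro s ψ hψ
    obtain ⟨u0, u1, _⟩ := hUU s ψ hψ
    have hw : 0 ≤ (1+ψ)^m := by positivity
    have g0 := hG0 s ψ hψ
    have g1 := hG 1 le_rfl s ψ hψ
    have v0 := mul_le_mul_of_nonneg_left u0 hw
    have v1 := mul_le_mul_of_nonneg_left u1 hw
    rw [Finset.sum_range_succ, Finset.sum_range_one]
    simp only [dS] at v0 v1 g0 g1 ⊢
    refine (add_le_add v0 v1).trans ?_
    have g0' := mul_le_mul_of_nonneg_left g0 hC.le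
    have g1' := mul_le_mul_of_nonneg_left g1 hC.le
    have e0 : 24 * C * (1 + K) * M = 24 * (C * M) + 24 * (C * K * M) := by ring
    have e1 : C * (K * M) = C * K * M := by ring
    rw [e0]
    rw [e1] at g0' g1'
    rw [mul_left_comm, mul_left_comm _ C, mul_add _ (_ + _) (_ + _), mul_add C]
    linarith
  · have fin0 : ∀ (Q : ℝ → ℝ → ℝ), XFinite L 2 50 Q → FiniteL2 L (wt 0 (dS 2 Q)) :=
      fun Q hQ => (hQ 2 le_rfl 0 (by norm_num)).1
    have fd0 := (fd 0 (by norm_num)).1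
    have f20 := (f2 0 (by norm_num) m hm).1
    have key : ∀ j ≤ 2, Real.sqrt (L2sq L (wt m
              (dS j (fun s' ψ' => Q₁ s' ψ' / (ω₁ ^ 2 * (q_e s') ^ 2 + Q₁ s' ψ')
                - Q₂ s' ψ' / (ω₂ ^ 2 * (q_e s') ^ 2 + Q₂ s' ψ'))))) ≤ 8 * C * (1 + K) * M := by
      intro j hj
      refine Real.sqrt_le_iff.2 ⟨by positivity, ?_⟩
      have main := L2_bound (L := L) (m := m) (N := K * M) (κ := κ)
        (u := dS j (fun s' ψ' => Q₁ s' ψ' / (ω₁ ^ 2 * (q_e s') ^ 2 + Q₁ s' ψ')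
                - Q₂ s' ψ' / (ω₂ ^ 2 * (q_e s') ^ 2 + Q₂ s' ψ'))) hC.le
        fd0 (fd 1 (by norm_num)).1 (fd 2 le_rfl).1
        f20 (f2 1 (by norm_num) m hm).1 (f2 2 le_rfl m hm).1 (fin0 Q₁ f1) (fin0 Q₂ f2)
        (by simpa only [dS_zero] using hG0) (by
          intro s ψ hψ
          obtain ⟨u0, u1, u2⟩ := hUU s ψ hψ
          rw [dS_zero, dS_zero]
          have n0 : 0 ≤ |d s ψ| + |κ| * |Q₂ s ψ| := by positivity
          have n1 : 0 ≤ |dS 1 d s ψ| + |κ| * |dS 1 Q₂ s ψ| := by positivity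
          have n2 : 0 ≤ |dS 2 d s ψ| + |κ| * |dS 2 Q₂ s ψ| := by positivity
          have n3 : 0 ≤ (|d s ψ| + |κ| * |Q₂ s ψ|) * (|dS 2 Q₁ s ψ| + |dS 2 Q₂ s ψ|) := by
            positivity
          interval_cases j
          · refine u0.trans (mul_le_mul_of_nonneg_left ?_ hC.le)
            linarith
          · refine u1.trans (mul_le_mul_of_nonneg_left ?_ hC.le)
            linarith
          · exact u2)
      have dk : ∀ k ≤ 2, L2sq L (wt m (dS k d)) ≤ M ^ 2 := by
        intro k hk
        refine (L2sq_le_X d hk le_rfl).trans (pow_le_pow_left₀ hX0 ?_ 2)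
        linarith
      have xe : ∀ Q, Xnorm L 2 50 Q ≤ ε ^ (0.99 : ℝ) → ∀ k ≤ 2, ∀ n ≤ 50,
          L2sq L (wt n (dS k Q)) ≤ (ε ^ (0.99 : ℝ)) ^ 2 := by
        intro Q hQ k hk n hn
        exact (L2sq_le_X Q hk hn).trans (pow_le_pow_left₀ (Xnorm_nonneg _ _ _ _) hQ 2)
      have rk : ∀ k ≤ 2, κ ^ 2 * L2sq L (wt m (dS k Q₂)) ≤ M ^ 2 := by
        intro k hk
        calc κ ^ 2 * L2sq L (wt m (dS k Q₂)) ≤ κ ^ 2 * (ε ^ (0.99 : ℝ)) ^ 2 :=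
              mul_le_mul_of_nonneg_left (xe Q₂ x2 k hk m hm) (sq_nonneg _)
          _ = (ε ^ (1.99 : ℝ) * |b₁ - b₂|) ^ 2 := by rw [← hκa, mul_pow |κ|, sq_abs]
          _ ≤ M ^ 2 := pow_le_pow_left₀ hZ0 (by linarith) 2
      have e1 : (ε ^ (0.99 : ℝ)) ^ 2 ≤ 1 := pow_le_one₀ hεp.le hε1
      have q1 := (xe Q₁ x1 2 le_rfl 0 (by norm_num)).trans e1
      have q2 := (xe Q₂ x2 2 le_rfl 0 (by norm_num)).trans e1
      have q3 : (K * M) ^ 2 * (L2sq L (wt 0 (dS 2 Q₁)) + L2sq L (wt 0 (dS 2 Q₂)))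
          ≤ (K * M) ^ 2 * 2 := mul_le_mul_of_nonneg_left (by linarith) (sq_nonneg _)
      have d0 := dk 0 (by norm_num)
      have d1 := dk 1 (by norm_num)
      have d2 := dk 2 le_rfl
      have r0 := rk 0 (by norm_num)
      have r1 := rk 1 (by norm_num)
      have r2 := rk 2 le_rfl
      refine main.trans ?_
      calc _ ≤ 8 * C ^ 2 * (6 * M ^ 2 + (K * M) ^ 2 * 2) := by
            refine mul_le_mul_of_nonneg_left ?_ (by positivity)
            rw [mul_add, mul_add]
            linarith
        _ ≤ (8 * C * (1 + K) * M) ^ 2 := by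
            have : 0 ≤ C ^ 2 * M ^ 2 * (16 + 128 * K + 48 * K ^ 2) := by positivity
            have e3 : (8 * C * (1 + K) * M) ^ 2 = 8 * C ^ 2 * (6 * M ^ 2 + (K * M) ^ 2 * 2)
              + C ^ 2 * M ^ 2 * (16 + 128 * K + 48 * K ^ 2) := by ring
            linarith
    rw [Finset.sum_range_succ, Finset.sum_range_succ, Finset.sum_range_one]
    have k0 := key 0 (by norm_num)
    have k1 := key 1 (by norm_num)
    have k2 := key 2 le_rfl
    linarith
end
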